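/- Let conditions A, B, C and D₁ hold, with v_ε = p_ε^{−1}. Then, for any family of initial distributions q̄_ε, the first-rare-event-time processes ξ_ε(t) converge in finite-dimensional distributions to the process ξ₀(t) = θ₀(tν₀), where θ₀(t) is a nonnegative Lévy process with E e^{−sθ₀(t)} = e^{−tA(s)} and ν₀ is an exponential random variable with parameter 1 independent of θ₀(·); explicitly, for any 0 = t₀ ≤ t₁ ≤ … ≤ t_n < ∞ and s₁, …, s_n > 0: E exp{−Σ_{r=1}^n s_r (ξ_ε(t_r) − ξ_ε(t_{r−1}))} → (1 + Σ_{r=1}^n A(s_r)(t_r − t_{r−1}))^{−1} as ε → 0. -/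

import Mathlib

open MeasureTheory Filter Set
open scoped Topology ENNReal

noncomputable section

/-- Condition B: there exists a ring chain of states `c 0, c 1, …, c N = c 0`
containing all states of the phase space, with
`liminf_{ε→0+} p ε (c (k-1)) (c k) > 0` for `k = 1, …, N`. -/
def CondB {m : ℕ} (p : ℝ → Fin m → Fin m → ℝ) : Prop :=
  ∃ N : ℕ, 0 < N ∧ ∃ c : ℕ → Fin m, c N = c 0 ∧
    (∀ i : Fin m, ∃ k ≤ N, c k = i) ∧
    ∀ k < N, 0 < Filter.liminf (fun ε => p ε (c k) (c (k + 1))) (𝓝[>] (0 : ℝ))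

/-- `π` is a stationary distribution of the transition matrix `p`. -/
def IsStationaryDist {m : ℕ} (p : Fin m → Fin m → ℝ) (π : Fin m → ℝ) : Prop :=
  (∀ i, 0 ≤ π i) ∧ (∑ i, π i = 1) ∧ ∀ j, π j = ∑ i, π i * p i j

/-- `p_{ε,i} = P_i(ζ_{ε,1} = 1)`, the probability of occurrence of the rare event during
one transition step, starting from state `i`. -/
def rareP {m : ℕ} {Ω : Type} [MeasurableSpace Ω]
    (Pstart : ℝ → Fin m → Measure Ω) (ζ : ℝ → ℕ → Ω → Bool) (ε : ℝ) (i : Fin m) : ℝ :=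
  (Pstart ε i {ω | ζ ε 1 ω = true}).toReal

/-- `p_ε = Σ_i π_{ε,i} p_{ε,i}`, the stationary average of the rare-event probabilities. -/
def avgRare {m : ℕ} {Ω : Type} [MeasurableSpace Ω]
    (Pstart : ℝ → Fin m → Measure Ω) (ζ : ℝ → ℕ → Ω → Bool) (π : ℝ → Fin m → ℝ)
    (ε : ℝ) : ℝ :=
  ∑ i, π ε i * rareP Pstart ζ ε i

/-- `φ_ε(s) = Σ_i π_{ε,i} E_i e^{−sκ_{ε,1}}`, the stationary average of the Laplace
transforms of the sojourn times. -/
def lapPhi {m : ℕ} {Ω : Type} [MeasurableSpace Ω]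
    (Pstart : ℝ → Fin m → Measure Ω) (κ : ℝ → ℕ → Ω → ℝ) (π : ℝ → Fin m → ℝ)
    (ε s : ℝ) : ℝ :=
  ∑ i, π ε i * ∫ ω, Real.exp (-(s * κ ε 1 ω)) ∂(Pstart ε i)

/-- `ν_ε = min{n ≥ 1 : ζ_{ε,n} = 1}`, the number of steps until the first rare event. -/
def nuRE {Ω : Type} (ζ : ℝ → ℕ → Ω → Bool) (ε : ℝ) (ω : Ω) : ℕ :=
  sInf {n : ℕ | 1 ≤ n ∧ ζ ε n ω = true}

/-- `ξ_ε = Σ_{n=1}^{ν_ε} κ_{ε,n}`, the first-rare-event time. -/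
def xiRE {Ω : Type} (κ : ℝ → ℕ → Ω → ℝ) (ζ : ℝ → ℕ → Ω → Bool) (ε : ℝ) (ω : Ω) : ℝ :=
  ∑ n ∈ Finset.Icc 1 (nuRE ζ ε ω), κ ε n ω

/-- The first-rare-event-time process `ξ_ε(t) = Σ_{n=1}^{[t ν_ε]} κ_{ε,n}`. -/
def xiProc {Ω : Type} (κ : ℝ → ℕ → Ω → ℝ) (ζ : ℝ → ℕ → Ω → Bool) (ε t : ℝ) (ω : Ω) : ℝ :=
  ∑ n ∈ Finset.Icc 1 (Nat.floor (t * (nuRE ζ ε ω : ℝ))), κ ε n ω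

open scoped Matrix

/-!
Joint Laplace transforms of sojourn times up to nonrandom step numbers, together with survival of
the rare event, are products of nonnegative matrices `W` close to the transition matrix of the
embedded chain. Condition B makes that chain mix at a rate uniform in `ε`, so the powers of `W`
applied to `1` are nearly constant vectors, and `W ^ N *ᵥ 1` is asymptotically `exp (-c)` when `N`
times the stationary mean defect `r = π ⬝ᵥ (1 - W *ᵥ 1)` tends to `c`. By D₁ a step weighted by
`exp (-s κ)` has defect of order `A s * p_ε`; excluding the rare event adds `p_ε` to it, since by
condition C a sojourn time that ends with the rare event is negligible. Hence, on the scale of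
`1 / p_ε` steps, the sums of sojourn times behave like a Lévy process with cumulant `A` and `ν_ε`
like an independent exponential variable. The random step number `ν_ε` is then inserted by
approximating it along a grid, and integrating `exp (-Λ x)` with `Λ = ∑ A (s r) (t r - t (r - 1))`
against the exponential law gives `(1 + Λ)⁻¹`.
-/

section PersistentlyConnected

variable {ι X : Type*} {l : Filter ι} {P : ι → Matrix X X ℝ}

/-- The entry `(u, v)` of a family of matrices stays bounded away from `0` along `l`: the edges of
the ring chain in condition B, for which `0 < liminf` is replaced by an eventual lower bound. -/
def PersistentEdge (l : Filter ι) (P : ι → Matrix X X ℝ) (u v : X) : Prop :=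
  ∃ a > 0, ∀ᶠ ε in l, a ≤ P ε u v

/-- Irreducibility of a family of matrices, uniform along `l`: any two states are joined by a path
of persistent edges. This is the form in which condition B enters the proof. -/
def PersistentlyConnected (l : Filter ι) (P : ι → Matrix X X ℝ) : Prop :=
  ∀ u v, Relation.ReflTransGen (PersistentEdge l P) u v

lemma PersistentlyConnected.transpose (h : PersistentlyConnected l P) :
    PersistentlyConnected l fun ε => (P ε)ᵀ :=
  fun u v => Relation.ReflTransGen.swap _ _ (h v u)

lemma exists_le_mul_of_reflTransGen {u v : X}
    (h : Relation.ReflTransGen (PersistentEdge l P) u v) :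
    ∃ C > 0, ∀ᶠ ε in l, ∀ (x : X → ℝ) (G : ℝ), 0 ≤ x → 0 ≤ G →
      (∀ a b, P ε a b * x b ≤ x a + G) → x v ≤ C * (x u + G) := by
  induction h with
  | refl =>
    refine ⟨1, one_pos, Eventually.of_forall fun ε x G _ hG _ => ?_⟩
    linarith
  | @tail b c _ hbc ih =>
    obtain ⟨C, hC, hbound⟩ := ih
    obtain ⟨a, ha, hedge⟩ := hbc
    refine ⟨(C + 1) / a, by positivity, ?_⟩
    filter_upwards [hbound, hedge] with ε hbound hedge x G hx hG hsup
    rw [div_mul_eq_mul_div, le_div_iff₀ ha]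
    calc x c * a ≤ P ε b c * x c := by
          rw [mul_comm]; exact mul_le_mul_of_nonneg_right hedge (hx c)
      _ ≤ x b + G := hsup b c
      _ ≤ C * (x u + G) + (x u + G) := by
          have := hx u
          simp only [Pi.zero_apply] at this
          linarith [hbound x G hx hG hsup]
      _ = (C + 1) * (x u + G) := by ring

variable [Fintype X]

theorem PersistentlyConnected.exists_harnack (h : PersistentlyConnected l P)
    (hP : ∀ᶠ ε in l, ∀ u v, 0 ≤ P ε u v) :
    ∃ C > 0, ∀ᶠ ε in l, ∀ (x : X → ℝ) (G : ℝ), 0 ≤ x → 0 ≤ G →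
      (∀ u, (P ε *ᵥ x) u ≤ x u + G) → ∀ u v, x v ≤ C * (x u + G) := by
  choose C hC hbound using fun u v => exists_le_mul_of_reflTransGen (h u v)
  refine ⟨1 + ∑ u, ∑ v, C u v,
    add_pos_of_pos_of_nonneg one_pos (Finset.sum_nonneg fun u _ => Finset.sum_nonneg fun v _ =>
      (hC u v).le), ?_⟩
  filter_upwards [hP, eventually_all.2 fun u => eventually_all.2 fun v => hbound u v]
    with ε hP hbound x G hx hG hsup u v
  have hentry (a b) : P ε a b * x b ≤ x a + G :=
    (Finset.single_le_sum (f := fun b => P ε a b * x b) (fun b _ => mul_nonneg (hP a b) (hx b))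
      (Finset.mem_univ b)).trans (hsup a)
  have hCle : C u v ≤ ∑ u, ∑ v, C u v :=
    (Finset.single_le_sum (fun b _ => (hC u b).le) (Finset.mem_univ v)).trans
      (Finset.single_le_sum (f := fun a => ∑ b, C a b)
        (fun a _ => Finset.sum_nonneg fun b _ => (hC a b).le) (Finset.mem_univ u))
  exact (hbound u v x G hx hG hentry).trans
    (mul_le_mul_of_nonneg_right (by linarith) (add_nonneg (hx u) hG))

theorem PersistentlyConnected.exists_pos_le_of_stationary (h : PersistentlyConnected l P)
    (hP : ∀ᶠ ε in l, ∀ u v, 0 ≤ P ε u v) {π : ι → X → ℝ}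
    (hπ : ∀ᶠ ε in l, π ε ∈ stdSimplex ℝ X) (hstat : ∀ᶠ ε in l, π ε ᵥ* P ε = π ε) :
    ∃ c > 0, ∀ᶠ ε in l, ∀ u, c ≤ π ε u := by
  obtain ⟨C, hC, hharnack⟩ := h.transpose.exists_harnack (hP.mono fun ε hP u v => hP v u)
  refine ⟨(C * (1 + Fintype.card X))⁻¹, by positivity, ?_⟩
  filter_upwards [hharnack, hπ, hstat] with ε hharnack hπ hstat u
  have hle (v) : π ε v ≤ C * π ε u := by
    simpa using hharnack (π ε) 0 hπ.1 le_rfl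
      (fun w => by rw [Matrix.mulVec_transpose, hstat, add_zero]) u v
  have hone : 1 ≤ Fintype.card X * (C * π ε u) := by
    rw [← hπ.2]
    simpa using Finset.sum_le_sum fun v (_ : v ∈ Finset.univ) => hle v
  rw [inv_le_iff_one_le_mul₀ (by positivity)]
  nlinarith [mul_nonneg hC.le (hπ.1 u)]

variable [DecidableEq X]

theorem PersistentlyConnected.exists_sub_le_mul (h : PersistentlyConnected l P)
    (hP : ∀ᶠ ε in l, P ε ∈ Matrix.rowStochastic ℝ X) :
    ∃ C > 0, ∀ᶠ ε in l, ∀ (f : X → ℝ) (G : ℝ), 0 ≤ G →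
      (∀ u, (P ε *ᵥ f) u ≤ f u + G) → ∀ u v, f v - f u ≤ C * G := by
  obtain ⟨C, hC, hharnack⟩ :=
    h.exists_harnack (hP.mono fun ε hP u v => Matrix.nonneg_of_mem_rowStochastic hP)
  refine ⟨C, hC, ?_⟩
  filter_upwards [hP, hharnack] with ε hP hharnack f G hG hsup u v
  have : Nonempty X := ⟨u⟩
  obtain ⟨w, hw⟩ := Finite.exists_min f
  have hshift : P ε *ᵥ (f - fun _ => f w) = P ε *ᵥ f - fun _ => f w := by
    have hconst : (fun _ : X => f w) = f w • (1 : X → ℝ) := by ext; simp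
    rw [Matrix.mulVec_sub, hconst, Matrix.mulVec_smul, Matrix.one_vecMul_of_mem_rowStochastic hP]
  have hmin := hharnack (f - fun _ => f w) G (fun a => sub_nonneg.2 (hw a)) hG
    (fun a => by simp only [hshift, Pi.sub_apply]; linarith [hsup a]) w v
  simp only [Pi.sub_apply, sub_self, zero_add] at hmin
  linarith [hw u]

end PersistentlyConnected

section Substochastic

variable {X : Type*} [Fintype X]

/-- Entrywise nonnegative matrices whose row sums are at most `1`: the defective transition
matrices obtained from a stochastic one by killing or discounting. -/
def IsSubstochastic (W : Matrix X X ℝ) : Prop :=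
  (∀ u v, 0 ≤ W u v) ∧ W *ᵥ 1 ≤ 1

/-- Mean loss of mass in one step of `W`, started from the distribution `π`. -/
def meanDefect (π : X → ℝ) (W : Matrix X X ℝ) : ℝ :=
  π ⬝ᵥ (1 - W *ᵥ 1)

lemma mulVec_mono_of_nonneg {W : Matrix X X ℝ} (hW : ∀ u v, 0 ≤ W u v) {f g : X → ℝ}
    (hfg : f ≤ g) : W *ᵥ f ≤ W *ᵥ g :=
  fun u => Finset.sum_le_sum fun v _ => mul_le_mul_of_nonneg_left (hfg v) (hW u v)

lemma IsSubstochastic.norm_mulVec_le {W : Matrix X X ℝ} (hW : IsSubstochastic W) (f : X → ℝ) :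
    ‖W *ᵥ f‖ ≤ ‖f‖ := by
  refine (pi_norm_le_iff_of_nonneg (norm_nonneg f)).2 fun u => ?_
  calc ‖(W *ᵥ f) u‖ ≤ ∑ v, ‖W u v * f v‖ := norm_sum_le _ _
    _ ≤ ∑ v, W u v * ‖f‖ := Finset.sum_le_sum fun v _ => by
        rw [norm_mul, Real.norm_of_nonneg (hW.1 u v)]
        exact mul_le_mul_of_nonneg_left (norm_le_pi_norm f v) (hW.1 u v)
    _ = (W *ᵥ 1) u * ‖f‖ := by simp [Matrix.mulVec, dotProduct, Finset.sum_mul]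
    _ ≤ ‖f‖ := mul_le_of_le_one_left (norm_nonneg f) (hW.2 u)

lemma dotProduct_const_of_mem_stdSimplex {π : X → ℝ} (hπ : π ∈ stdSimplex ℝ X) (a : ℝ) :
    π ⬝ᵥ (fun _ => a) = a := by
  simp [dotProduct, ← Finset.sum_mul, hπ.2]

lemma dotProduct_le_dotProduct_of_mem_stdSimplex {π : X → ℝ} (hπ : π ∈ stdSimplex ℝ X)
    {f g : X → ℝ} (hfg : f ≤ g) : π ⬝ᵥ f ≤ π ⬝ᵥ g :=
  Finset.sum_le_sum fun u _ => mul_le_mul_of_nonneg_left (hfg u) (hπ.1 u)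

lemma abs_dotProduct_sub_le {π : X → ℝ} (hπ : π ∈ stdSimplex ℝ X) {f : X → ℝ} {a K : ℝ}
    (hf : ∀ u, |f u - a| ≤ K) : |π ⬝ᵥ f - a| ≤ K := by
  rw [abs_sub_le_iff, sub_le_iff_le_add, sub_le_comm]
  constructor
  · rw [← dotProduct_const_of_mem_stdSimplex hπ (K + a)]
    exact dotProduct_le_dotProduct_of_mem_stdSimplex hπ fun u => by
      linarith [(abs_le.1 (hf u)).2]
  · rw [← dotProduct_const_of_mem_stdSimplex hπ (a - K)]
    exact dotProduct_le_dotProduct_of_mem_stdSimplex hπ fun u => by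
      linarith [(abs_le.1 (hf u)).1]

lemma IsSubstochastic.meanDefect_mem_Icc {π : X → ℝ} (hπ : π ∈ stdSimplex ℝ X)
    {W : Matrix X X ℝ} (hW : IsSubstochastic W) : meanDefect π W ∈ Icc (0 : ℝ) 1 := by
  have hmass : 0 ≤ W *ᵥ 1 := by simpa using mulVec_mono_of_nonneg hW.1 zero_le_one
  constructor
  · rw [← dotProduct_const_of_mem_stdSimplex hπ 0]
    exact dotProduct_le_dotProduct_of_mem_stdSimplex hπ fun u => sub_nonneg.2 (hW.2 u)
  · rw [← dotProduct_const_of_mem_stdSimplex hπ 1]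
    exact dotProduct_le_dotProduct_of_mem_stdSimplex hπ fun u => sub_le_self _ (hmass u)

lemma IsSubstochastic.one_sub_mulVec_one_le {π : X → ℝ} {W : Matrix X X ℝ} {c : ℝ} (hc : 0 < c)
    (hπ : ∀ u, c ≤ π u) (hW : IsSubstochastic W) (u : X) :
    (1 - W *ᵥ 1) u ≤ meanDefect π W / c := by
  have hdef (v : X) : 0 ≤ (1 - W *ᵥ 1) v := sub_nonneg.2 (hW.2 v)
  rw [le_div_iff₀ hc]
  calc (1 - W *ᵥ 1) u * c ≤ π u * (1 - W *ᵥ 1) u := by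
        rw [mul_comm]; exact mul_le_mul_of_nonneg_right (hπ u) (hdef u)
    _ ≤ meanDefect π W := Finset.single_le_sum
        (f := fun v => π v * (1 - W *ᵥ 1) v)
        (fun v _ => mul_nonneg (hc.le.trans (hπ v)) (hdef v)) (Finset.mem_univ u)

/-- By stationarity, the loss `π ⬝ᵥ ((P - W) *ᵥ f)` in one step is `meanDefect π W` times an
average of `f`. -/
lemma abs_dotProduct_mulVec_sub_le {P W : Matrix X X ℝ} {π f : X → ℝ} {B : ℝ}
    (hπ : π ∈ stdSimplex ℝ X) (hstat : π ᵥ* P = π) (hWP : ∀ u v, W u v ≤ P u v)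
    (hf : ∀ u, |f u - π ⬝ᵥ f| ≤ B) :
    |π ⬝ᵥ (W *ᵥ f) - (1 - meanDefect π W) * (π ⬝ᵥ f)| ≤ meanDefect π W * B := by
  have hstep (g : X → ℝ) : π ⬝ᵥ (W *ᵥ g) = π ⬝ᵥ g - (π ᵥ* (P - W)) ⬝ᵥ g := by
    rw [Matrix.vecMul_sub, hstat, sub_dotProduct, ← Matrix.dotProduct_mulVec]
    ring
  have hmass : meanDefect π W = ∑ u, (π ᵥ* (P - W)) u := by
    rw [meanDefect, dotProduct_sub, hstep, sub_sub_cancel, dotProduct_one]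
  calc |π ⬝ᵥ (W *ᵥ f) - (1 - meanDefect π W) * (π ⬝ᵥ f)|
      = |∑ u, (π ᵥ* (P - W)) u * (f u - π ⬝ᵥ f)| := by
        rw [hstep f, ← abs_neg, hmass]
        simp only [dotProduct, mul_sub, Finset.sum_sub_distrib, ← Finset.sum_mul]
        congr 1
        ring
    _ ≤ ∑ u, (π ᵥ* (P - W)) u * B := by
        refine (Finset.abs_sum_le_sum_abs _ _).trans (Finset.sum_le_sum fun u _ => ?_)
        have hnn : 0 ≤ (π ᵥ* (P - W)) u :=
          Finset.sum_nonneg fun v _ => mul_nonneg (hπ.1 v) (sub_nonneg.2 (hWP v u))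
        rw [abs_mul, abs_of_nonneg hnn]
        exact mul_le_mul_of_nonneg_left (hf u) hnn
    _ = meanDefect π W * B := by rw [← Finset.sum_mul, ← hmass]

variable [DecidableEq X]

lemma IsSubstochastic.pow {W : Matrix X X ℝ} (hW : IsSubstochastic W) (n : ℕ) :
    IsSubstochastic (W ^ n) := by
  induction n with
  | zero =>
    refine ⟨fun u v => ?_, by simp⟩
    rw [pow_zero, Matrix.one_apply]
    split_ifs <;> norm_num
  | succ n ih =>
    refine ⟨fun u v => ?_, ?_⟩
    · rw [pow_succ, Matrix.mul_apply]
      exact Finset.sum_nonneg fun w _ => mul_nonneg (ih.1 u w) (hW.1 w v)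
    · rw [pow_succ, ← Matrix.mulVec_mulVec]
      exact (mulVec_mono_of_nonneg ih.1 hW.2).trans ih.2

lemma isSubstochastic_of_le_rowStochastic {P W : Matrix X X ℝ}
    (hP : P ∈ Matrix.rowStochastic ℝ X) (hW : ∀ u v, W u v ∈ Icc 0 (P u v)) :
    IsSubstochastic W := by
  refine ⟨fun u v => (hW u v).1, ?_⟩
  calc W *ᵥ 1 ≤ P *ᵥ 1 := fun u => Finset.sum_le_sum fun v _ =>
    mul_le_mul_of_nonneg_right (hW u v).2 zero_le_one
    _ = 1 := Matrix.one_vecMul_of_mem_rowStochastic hP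

lemma mulVec_pow_mulVec_one_le {P W : Matrix X X ℝ} (hP : P ∈ Matrix.rowStochastic ℝ X)
    (hWP : ∀ u v, W u v ∈ Icc 0 (P u v)) (n : ℕ) (u : X) :
    (P *ᵥ (W ^ n *ᵥ 1)) u ≤ (W ^ n *ᵥ 1) u + (1 - W *ᵥ 1) u := by
  have hW := isSubstochastic_of_le_rowStochastic hP hWP
  have hloss : (P - W) *ᵥ (W ^ n *ᵥ 1) ≤ (P - W) *ᵥ 1 :=
    mulVec_mono_of_nonneg (fun a b => sub_nonneg.2 (hWP a b).2) (hW.pow n).2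
  have hdecr : W *ᵥ (W ^ n *ᵥ 1) ≤ W ^ n *ᵥ 1 := by
    rw [Matrix.mulVec_mulVec, ← pow_succ', pow_succ, ← Matrix.mulVec_mulVec]
    exact mulVec_mono_of_nonneg (hW.pow n).1 hW.2
  rw [Matrix.sub_mulVec, Matrix.sub_mulVec, Matrix.one_vecMul_of_mem_rowStochastic hP] at hloss
  have := hloss u
  have := hdecr u
  simp only [Pi.sub_apply] at *
  linarith

lemma abs_dotProduct_pow_mulVec_one_sub_pow_le {P W : Matrix X X ℝ} {π : X → ℝ} {B : ℝ}
    (hπ : π ∈ stdSimplex ℝ X) (hstat : π ᵥ* P = π) (hP : P ∈ Matrix.rowStochastic ℝ X)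
    (hWP : ∀ u v, W u v ∈ Icc 0 (P u v))
    (hosc : ∀ n u, |(W ^ n *ᵥ 1) u - π ⬝ᵥ (W ^ n *ᵥ 1)| ≤ B) (n : ℕ) :
    |π ⬝ᵥ (W ^ n *ᵥ 1) - (1 - meanDefect π W) ^ n| ≤ n * (meanDefect π W * B) := by
  obtain ⟨hr0, hr1⟩ :=
    (isSubstochastic_of_le_rowStochastic hP hWP).meanDefect_mem_Icc hπ
  induction n with
  | zero => simp [dotProduct_one, hπ.2]
  | succ n ih =>
    set r := meanDefect π W
    have hstep := abs_dotProduct_mulVec_sub_le hπ hstat (fun u v => (hWP u v).2) (hosc n)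
    rw [Matrix.mulVec_mulVec, ← pow_succ'] at hstep
    calc |π ⬝ᵥ (W ^ (n + 1) *ᵥ 1) - (1 - r) ^ (n + 1)|
        = |(π ⬝ᵥ (W ^ (n + 1) *ᵥ 1) - (1 - r) * π ⬝ᵥ (W ^ n *ᵥ 1))
            + (1 - r) * (π ⬝ᵥ (W ^ n *ᵥ 1) - (1 - r) ^ n)| := by congr 1; ring
      _ ≤ r * B + |π ⬝ᵥ (W ^ n *ᵥ 1) - (1 - r) ^ n| := by
          refine (abs_add_le _ _).trans (add_le_add hstep ?_)
          rw [abs_mul, abs_of_nonneg (sub_nonneg.2 hr1)]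
          exact mul_le_of_le_one_left (abs_nonneg _) (by linarith)
      _ ≤ r * B + n * (r * B) := by gcongr
      _ = (n + 1 : ℕ) * (r * B) := by push_cast; ring

end Substochastic

section UniformlyErgodic

lemma tendsto_one_sub_pow_exp {ι : Type*} {l : Filter ι} {r : ι → ℝ} {N : ι → ℕ} {x : ℝ}
    (hr0 : Tendsto r l (𝓝 0)) (hN : Tendsto (fun ε => N ε * r ε) l (𝓝 x)) :
    Tendsto (fun ε => (1 - r ε) ^ N ε) l (𝓝 (Real.exp (-x))) := by
  have hpos : ∀ᶠ ε in l, 0 < 1 - r ε :=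
    (hr0.eventually (gt_mem_nhds one_pos)).mono fun ε h => sub_pos.2 h
  have hlog : Tendsto (fun ε => N ε * Real.log (1 - r ε)) l (𝓝 (-x)) := by
    refine tendsto_of_tendsto_of_tendsto_of_le_of_le' (g := fun ε => -(N ε * r ε) / (1 - r ε))
      (h := fun ε => -(N ε * r ε)) ?_ hN.neg ?_ ?_
    · have hquot := hN.neg.div (hr0.const_sub 1) (by simp)
      rw [sub_zero, div_one] at hquot
      exact hquot
    · filter_upwards [hpos] with ε hpos
      calc -(N ε * r ε) / (1 - r ε) = N ε * (1 - (1 - r ε)⁻¹) := by field_simp; ring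
        _ ≤ N ε * Real.log (1 - r ε) :=
            mul_le_mul_of_nonneg_left (Real.one_sub_inv_le_log_of_pos hpos) (Nat.cast_nonneg _)
    · filter_upwards [hpos] with ε hpos
      calc N ε * Real.log (1 - r ε) ≤ N ε * (1 - r ε - 1) :=
            mul_le_mul_of_nonneg_left (Real.log_le_sub_one_of_pos hpos) (Nat.cast_nonneg _)
        _ = -(N ε * r ε) := by ring
  refine ((Real.continuous_exp.tendsto _).comp hlog).congr' (hpos.mono fun ε hpos => ?_)
  rw [Function.comp_apply, mul_comm, Real.exp_mul, Real.exp_log hpos, Real.rpow_natCast]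

variable {ι X : Type*} {l : Filter ι} [Fintype X] [DecidableEq X]
  {P W : ι → Matrix X X ℝ} {π : ι → X → ℝ}

/-- A family of finite Markov chains whose transition matrices `P ε` are irreducible uniformly
along `l`, together with stationary distributions `π ε`. -/
structure UniformlyErgodic (l : Filter ι) (P : ι → Matrix X X ℝ) (π : ι → X → ℝ) : Prop where
  connected : PersistentlyConnected l P
  stochastic : ∀ᶠ ε in l, P ε ∈ Matrix.rowStochastic ℝ X
  mem_stdSimplex : ∀ᶠ ε in l, π ε ∈ stdSimplex ℝ X
  stationary : ∀ᶠ ε in l, π ε ᵥ* P ε = π ε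

theorem UniformlyErgodic.exists_pos_le (h : UniformlyErgodic l P π) :
    ∃ c > 0, ∀ᶠ ε in l, ∀ u, c ≤ π ε u :=
  h.connected.exists_pos_le_of_stationary
    (h.stochastic.mono fun _ hP _ _ => Matrix.nonneg_of_mem_rowStochastic hP)
    h.mem_stdSimplex h.stationary

theorem UniformlyErgodic.exists_abs_sub_le_mul_meanDefect (h : UniformlyErgodic l P π)
    (hW : ∀ᶠ ε in l, ∀ u v, W ε u v ∈ Icc 0 (P ε u v)) :
    ∃ K, ∀ᶠ ε in l, ∀ n u v,
      |(W ε ^ n *ᵥ 1) u - (W ε ^ n *ᵥ 1) v| ≤ K * meanDefect (π ε) (W ε) := by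
  obtain ⟨c, hc, hπ⟩ := h.exists_pos_le
  obtain ⟨C, -, hosc⟩ := h.connected.exists_sub_le_mul h.stochastic
  refine ⟨C / c, ?_⟩
  filter_upwards [hπ, hosc, h.stochastic, hW, h.mem_stdSimplex] with ε hπ hosc hP hW hsimplex n u v
  have hWsub := isSubstochastic_of_le_rowStochastic hP hW
  have hsub (u v) := hosc (W ε ^ n *ᵥ 1) (meanDefect (π ε) (W ε) / c)
    (div_nonneg (hWsub.meanDefect_mem_Icc hsimplex).1 hc.le)
    (fun u => (mulVec_pow_mulVec_one_le hP hW n u).trans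
      (add_le_add_right (hWsub.one_sub_mulVec_one_le hc hπ u) _)) u v
  rw [div_mul_eq_mul_div, ← mul_div_assoc']
  exact abs_sub_le_iff.2 ⟨hsub v u, hsub u v⟩

theorem UniformlyErgodic.tendsto_pow_mulVec_one (h : UniformlyErgodic l P π)
    (hW : ∀ᶠ ε in l, ∀ u v, W ε u v ∈ Icc 0 (P ε u v)) {N : ι → ℕ} {x : ℝ}
    (hr : Tendsto (fun ε => meanDefect (π ε) (W ε)) l (𝓝 0))
    (hN : Tendsto (fun ε => N ε * meanDefect (π ε) (W ε)) l (𝓝 x)) :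
    Tendsto (fun ε => W ε ^ N ε *ᵥ 1) l (𝓝 fun _ => Real.exp (-x)) := by
  obtain ⟨K, hK⟩ := h.exists_abs_sub_le_mul_meanDefect hW
  refine tendsto_pi_nhds.2 fun u => ?_
  rw [tendsto_iff_of_dist (f₂ := fun ε => (1 - meanDefect (π ε) (W ε)) ^ N ε)]
  · exact tendsto_one_sub_pow_exp hr hN
  have herr : Tendsto (fun ε => K * meanDefect (π ε) (W ε)
      + N ε * meanDefect (π ε) (W ε) * (K * meanDefect (π ε) (W ε))) l (𝓝 0) := by
    simpa using (hr.const_mul K).add (hN.mul (hr.const_mul K))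
  refine squeeze_zero' (Eventually.of_forall fun ε => dist_nonneg) ?_ herr
  filter_upwards [hK, h.stochastic, hW, h.mem_stdSimplex, h.stationary]
    with ε hK hP hW hsimplex hstat
  have hosc (n u) : |(W ε ^ n *ᵥ 1) u - π ε ⬝ᵥ (W ε ^ n *ᵥ 1)| ≤ K * meanDefect (π ε) (W ε) := by
    rw [abs_sub_comm]
    exact abs_dotProduct_sub_le hsimplex fun v => hK n v u
  refine (dist_triangle _ (π ε ⬝ᵥ (W ε ^ N ε *ᵥ 1)) _).trans (add_le_add (hosc _ u) ?_)
  rw [mul_assoc]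
  exact abs_dotProduct_pow_mulVec_one_sub_pow_le hsimplex hstat hP hW hosc _

theorem UniformlyErgodic.tendsto_pow_mulVec (h : UniformlyErgodic l P π)
    (hW : ∀ᶠ ε in l, ∀ u v, W ε u v ∈ Icc 0 (P ε u v)) {N : ι → ℕ} {x : ℝ}
    (hr : Tendsto (fun ε => meanDefect (π ε) (W ε)) l (𝓝 0))
    (hN : Tendsto (fun ε => N ε * meanDefect (π ε) (W ε)) l (𝓝 x))
    {f : ι → X → ℝ} {c : ℝ} (hf : Tendsto f l (𝓝 fun _ => c)) :
    Tendsto (fun ε => W ε ^ N ε *ᵥ f ε) l (𝓝 fun _ => c * Real.exp (-x)) := by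
  have hdiff : Tendsto (fun ε => W ε ^ N ε *ᵥ (f ε - fun _ => c)) l (𝓝 0) := by
    refine squeeze_zero_norm' ?_ (tendsto_iff_norm_sub_tendsto_zero.1 hf)
    filter_upwards [h.stochastic, hW] with ε hP hW
    exact ((isSubstochastic_of_le_rowStochastic hP hW).pow _).norm_mulVec_le _
  have hmain := hdiff.add ((h.tendsto_pow_mulVec_one hW hr hN).const_smul c)
  rw [zero_add] at hmain
  refine hmain.congr fun ε => ?_
  rw [← Matrix.mulVec_smul, ← Matrix.mulVec_add]
  congr 1
  ext u
  simp

end UniformlyErgodic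

section MarkovRenewal

lemma integral_eq_sum_setIntegral_fiber {Ω Y : Type*} [MeasurableSpace Ω] [Fintype Y]
    [MeasurableSpace Y] [MeasurableSingletonClass Y] {μ : Measure Ω} {f : Ω → Y}
    (hf : Measurable f) {F : Ω → ℝ} (hF : Integrable F μ) :
    ∫ ω, F ω ∂μ = ∑ y, ∫ ω in {ω | f ω = y}, F ω ∂μ := by
  have hcover : ⋃ y, {ω | f ω = y} = univ := iUnion_eq_univ_iff.2 fun ω => ⟨f ω, rfl⟩
  rw [← setIntegral_univ, ← hcover]
  refine integral_iUnion_fintype (fun y => hf (measurableSet_singleton y)) ?_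
    fun y => hF.integrableOn
  exact fun y y' hne => Set.disjoint_left.2 fun ω hy hy' => hne (hy.symm.trans hy')

variable {X Ω : Type*} [MeasurableSpace Ω]

/-- The states visited on the path that starts from `i` and whose `k`-th step leads to the state and
mark `J k`. -/
def pathState {Y : Type*} (i : X) {n : ℕ} (J : Fin n → X × Y) : Fin (n + 1) → X :=
  Fin.cons i fun k => (J k).1

lemma pathState_cons_succ {Y : Type*} (i : X) (y : X × Y) {n : ℕ} (J : Fin n → X × Y)
    (k : Fin (n + 1)) :
    pathState i (Fin.cons y J : Fin (n + 1) → X × Y) k.succ = pathState y.1 J k := by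
  cases k using Fin.cases <;> rfl

lemma prod_map_range_mulVec_one_eq_sum_path {Y : Type*} [Fintype X] [DecidableEq X] [Fintype Y]
    (n : ℕ) (c : ℕ → X → X × Y → ℝ) (i : X) :
    (((List.range n).map fun k => Matrix.of fun i j => ∑ z, c k i (j, z)).prod *ᵥ 1) i =
      ∑ J : Fin n → X × Y, ∏ k : Fin n, c k (pathState i J k.castSucc) (J k) := by
  induction n generalizing c i with
  | zero => simp
  | succ n ih =>
    rw [← (Fin.consEquiv fun _ : Fin (n + 1) => X × Y).sum_comp, Fintype.sum_prod_type,
      List.range_succ_eq_map, List.map_cons, List.prod_cons, List.map_map, ← Matrix.mulVec_mulVec,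
      Matrix.mulVec, dotProduct, Fintype.sum_prod_type]
    refine Finset.sum_congr rfl fun j _ => ?_
    have hih := ih (fun k => c (k + 1)) j
    simp only [Function.comp_def, Nat.succ_eq_add_one, Matrix.of_apply, hih, Finset.sum_mul]
    refine Finset.sum_congr rfl fun z _ => ?_
    rw [Finset.mul_sum]
    refine Finset.sum_congr rfl fun J _ => ?_
    simp only [Fin.consEquiv, Equiv.coe_fn_mk, Fin.prod_univ_succ, Fin.cons_zero, Fin.cons_succ,
      ← Fin.succ_castSucc, pathState_cons_succ, Fin.val_zero, Fin.val_succ]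
    rfl

/-- The law of a Markov renewal process `(η, κ, ζ)` with transition probabilities `Q`: under `P i`
the process starts from `i`, and its cylinder probabilities are products of values of `Q`. -/
structure IsMarkovRenewal [MeasurableSpace X] (η : ℕ → Ω → X) (κ : ℕ → Ω → ℝ) (ζ : ℕ → Ω → Bool)
    (P : X → Measure Ω) (Q : X → X → ℝ → Bool → ℝ) : Prop where
  isProbabilityMeasure : ∀ i, IsProbabilityMeasure (P i)
  measurable_state : ∀ n, Measurable (η n)
  measurable_sojourn : ∀ n, Measurable (κ n)
  measurable_mark : ∀ n, Measurable (ζ n)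
  sojourn_nonneg : ∀ n ω, 0 ≤ κ n ω
  law : ∀ n : ℕ, ∀ I : ℕ → X, ∀ T : ℕ → ℝ, ∀ Z : ℕ → Bool,
    P (I 0) {ω | ∀ k ≤ n, (η k ω = I k ∧ (1 ≤ k → (κ k ω ≤ T k ∧ ζ k ω = Z k)))}
      = ENNReal.ofReal (∏ k ∈ Finset.Icc 1 n, Q (I (k - 1)) (I k) (T k) (Z k))

/-- The law of the first sojourn time, started from `i` and restricted to the event that the first
step leads to the state and mark `y`. -/
def stepLaw (η : ℕ → Ω → X) (κ : ℕ → Ω → ℝ) (ζ : ℕ → Ω → Bool) (P : X → Measure Ω)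
    (i : X) (y : X × Bool) : Measure ℝ :=
  ((P i).restrict {ω | (η 1 ω, ζ 1 ω) = y}).map (κ 1)

/-- The transition matrix of the embedded chain with every step weighted by `g`, a function of the
mark and of the sojourn time of the step. -/
def stepMatrix (η : ℕ → Ω → X) (κ : ℕ → Ω → ℝ) (ζ : ℕ → Ω → Bool) (P : X → Measure Ω)
    (g : Bool → ℝ → ℝ) : Matrix X X ℝ :=
  Matrix.of fun i j => ∫ ω in {ω | η 1 ω = j}, g (ζ 1 ω) (κ 1 ω) ∂P i

namespace IsMarkovRenewal

variable [MeasurableSpace X] {η : ℕ → Ω → X} {κ : ℕ → Ω → ℝ}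
  {ζ : ℕ → Ω → Bool} {P : X → Measure Ω} {Q : X → X → ℝ → Bool → ℝ}

lemma isFiniteMeasure_stepLaw (h : IsMarkovRenewal η κ ζ P Q) (i : X) (y : X × Bool) :
    IsFiniteMeasure (stepLaw η κ ζ P i y) := by
  have := h.isProbabilityMeasure i
  exact Measure.isFiniteMeasure_map _ _

lemma measurable_step (h : IsMarkovRenewal η κ ζ P Q) {g : Bool → ℝ → ℝ}
    (hg : Measurable (Function.uncurry g)) (k : ℕ) : Measurable fun ω => g (ζ k ω) (κ k ω) :=
  hg.comp ((h.measurable_mark k).prodMk (h.measurable_sojourn k))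

lemma integrable_step (h : IsMarkovRenewal η κ ζ P Q) {g : Bool → ℝ → ℝ}
    (hg : Measurable (Function.uncurry g)) (hbound : ∀ z x, 0 ≤ x → |g z x| ≤ 1) (i : X) (k : ℕ) :
    Integrable (fun ω => g (ζ k ω) (κ k ω)) (P i) := by
  have := h.isProbabilityMeasure i
  exact Integrable.of_bound (h.measurable_step hg k).aestronglyMeasurable 1
    (Eventually.of_forall fun ω => hbound _ _ (h.sojourn_nonneg k ω))

variable [MeasurableSingletonClass X]

lemma ae_start (h : IsMarkovRenewal η κ ζ P Q) (i : X) : ∀ᵐ ω ∂P i, η 0 ω = i := by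
  have := h.isProbabilityMeasure i
  have hlaw := h.law 0 (fun _ => i) (fun _ => 0) (fun _ => true)
  refine (prob_compl_eq_zero_iff (h.measurable_state 0 (measurableSet_singleton i))).2 ?_
  simpa [preimage] using hlaw

lemma measure_cylinder_eq_ofReal_prod (h : IsMarkovRenewal η κ ζ P Q) (n : ℕ) (I : ℕ → X)
    (T : ℕ → ℝ) (Z : ℕ → Bool) :
    P (I 0) {ω | ∀ k < n, η (k + 1) ω = I (k + 1) ∧ κ (k + 1) ω ≤ T k ∧ ζ (k + 1) ω = Z k} =
      ENNReal.ofReal (∏ k ∈ Finset.range n, Q (I k) (I (k + 1)) (T k) (Z k)) := by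
  have hlaw := h.law n I (fun k => T (k - 1)) (fun k => Z (k - 1))
  rw [← Finset.Ico_add_one_right_eq_Icc, Finset.prod_Ico_eq_prod_range] at hlaw
  simp only [Nat.add_sub_cancel, add_comm 1] at hlaw
  rw [← hlaw]
  refine measure_congr ?_
  filter_upwards [h.ae_start (I 0)] with ω hω
  refine propext ⟨fun hcyl k hk => ?_, fun hcyl k hk => ?_⟩
  · cases k with
    | zero => simpa using hω
    | succ k => exact ⟨(hcyl k hk).1, fun _ => (hcyl k hk).2⟩
  · exact ⟨(hcyl (k + 1) hk).1, (hcyl (k + 1) hk).2 (by omega)⟩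

lemma measure_cylinder_eq_prod_ofReal (h : IsMarkovRenewal η κ ζ P Q) (n : ℕ) (I : ℕ → X)
    (T : ℕ → ℝ) (Z : ℕ → Bool) :
    P (I 0) {ω | ∀ k < n, η (k + 1) ω = I (k + 1) ∧ κ (k + 1) ω ≤ T k ∧ ζ (k + 1) ω = Z k} =
      ∏ k ∈ Finset.range n, ENNReal.ofReal (Q (I k) (I (k + 1)) (T k) (Z k)) := by
  induction n with
  | zero => simpa using h.measure_cylinder_eq_ofReal_prod 0 I T Z
  | succ n ih =>
    rw [Finset.prod_range_succ, ← ih]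
    rcases le_total 0 (∏ k ∈ Finset.range n, Q (I k) (I (k + 1)) (T k) (Z k)) with hpos | hneg
    · rw [h.measure_cylinder_eq_ofReal_prod, h.measure_cylinder_eq_ofReal_prod,
        Finset.prod_range_succ, ENNReal.ofReal_mul hpos]
    · have hnull := h.measure_cylinder_eq_ofReal_prod n I T Z
      rw [ENNReal.ofReal_of_nonpos hneg] at hnull
      rw [hnull, zero_mul]
      exact measure_mono_null (ofPred_subset_ofPred.2 fun ω hω k hk =>
        hω k (hk.trans n.lt_succ_self)) hnull

lemma stepLaw_Iic (h : IsMarkovRenewal η κ ζ P Q) (i : X) (y : X × Bool) (t : ℝ) :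
    stepLaw η κ ζ P i y (Iic t) = ENNReal.ofReal (Q i y.1 t y.2) := by
  have hcyl := h.measure_cylinder_eq_prod_ofReal 1 (fun k => if k = 0 then i else y.1)
    (fun _ => t) (fun _ => y.2)
  simp only [Finset.prod_range_one, if_true, zero_add, one_ne_zero, if_false, Nat.lt_one_iff,
    forall_eq] at hcyl
  rw [← hcyl, stepLaw, Measure.map_apply (h.measurable_sojourn 1) measurableSet_Iic,
    Measure.restrict_apply (h.measurable_sojourn 1 measurableSet_Iic)]
  congr 1
  ext ω
  simp only [mem_inter_iff, mem_preimage, mem_Iic, mem_ofPred_eq, Prod.ext_iff]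
  tauto

lemma measure_path_eq_prod (h : IsMarkovRenewal η κ ζ P Q) (i : X) {n : ℕ}
    (J : Fin n → X × Bool) (T : Fin n → ℝ) :
    P i {ω | ∀ k : Fin n, (η (k + 1) ω, ζ (k + 1) ω) = J k ∧ κ (k + 1) ω ≤ T k} =
      ∏ k : Fin n, stepLaw η κ ζ P (pathState i J k.castSucc) (J k) (Iic (T k)) := by
  have hcyl := h.measure_cylinder_eq_prod_ofReal n
    (Function.extend Fin.val (pathState i J) fun _ => i) (Function.extend Fin.val T 0)
    (Function.extend Fin.val (fun k => (J k).2) fun _ => true)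
  have hstate (k : Fin (n + 1)) :
      Function.extend Fin.val (pathState i J) (fun _ => i) k = pathState i J k :=
    Fin.val_injective.extend_apply _ _ k
  have hpre (k : Fin n) := hstate k.castSucc
  have hpost (k : Fin n) := hstate k.succ
  have hstart := hstate 0
  simp only [Fin.val_castSucc, Fin.val_succ, Fin.val_zero] at hpre hpost hstart
  simp only [Finset.prod_range, Fin.val_injective.extend_apply, hpre, hpost, hstart] at hcyl
  simp only [h.stepLaw_Iic]
  refine Eq.trans (congrArg (P i) (ext fun ω => ?_)) hcyl
  simp only [mem_ofPred_eq, Fin.forall_iff]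
  refine forall₂_congr fun k hk => ?_
  have hextend {Y : Type} (a : Fin n → Y) (b : ℕ → Y) :
      Function.extend Fin.val a b k = a ⟨k, hk⟩ :=
    Fin.val_injective.extend_apply a b ⟨k, hk⟩
  rw [hpost ⟨k, hk⟩, hextend, hextend, Prod.ext_iff]
  exact ⟨fun h => ⟨h.1.1, h.2, h.1.2⟩, fun h => ⟨⟨h.1, h.2.2⟩, h.2.1⟩⟩

lemma map_sojourn_restrict_path (h : IsMarkovRenewal η κ ζ P Q) (i : X) {n : ℕ}
    (J : Fin n → X × Bool) :
    ((P i).restrict {ω | (fun k : Fin n => (η (k + 1) ω, ζ (k + 1) ω)) = J}).map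
        (fun ω (k : Fin n) => κ (k + 1) ω) =
      Measure.pi fun k : Fin n => stepLaw η κ ζ P (pathState i J k.castSucc) (J k) := by
  have := h.isFiniteMeasure_stepLaw
  have hκ : Measurable fun ω (k : Fin n) => κ (k + 1) ω :=
    measurable_pi_lambda _ fun k => h.measurable_sojourn _
  refine (Measure.pi_eq_generateFrom (C := fun _ => range Iic)
    (fun _ => by rw [← borel_eq_generateFrom_Iic]; exact BorelSpace.measurable_eq.symm)
    (fun _ => isPiSystem_Iic) (fun _ => ⟨fun N => Iic (N : ℝ), fun N => ⟨_, rfl⟩,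
      fun N => measure_lt_top _ _, iUnion_Iic_of_not_bddAbove_range
        (not_bddAbove_of_tendsto_atTop tendsto_natCast_atTop_atTop)⟩) ?_).symm
  intro S hS
  choose T hT using hS
  obtain rfl : (fun k => Iic (T k)) = S := funext hT
  have hbox : MeasurableSet (univ.pi fun k => Iic (T k)) :=
    MeasurableSet.univ_pi fun k => measurableSet_Iic
  rw [Measure.map_apply hκ hbox, Measure.restrict_apply (hκ hbox), ← h.measure_path_eq_prod]
  congr 1
  ext ω
  simp only [mem_inter_iff, mem_preimage, mem_univ_pi, mem_Iic, mem_ofPred_eq, funext_iff]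
  exact and_comm.trans forall_and.symm

lemma setIntegral_path_eq_prod (h : IsMarkovRenewal η κ ζ P Q) {g : ℕ → Bool → ℝ → ℝ}
    (hg : ∀ k, Measurable (Function.uncurry (g k))) (i : X) {n : ℕ} (J : Fin n → X × Bool) :
    ∫ ω in {ω | (fun k : Fin n => (η (k + 1) ω, ζ (k + 1) ω)) = J},
        ∏ k ∈ Finset.range n, g k (ζ (k + 1) ω) (κ (k + 1) ω) ∂P i =
      ∏ k : Fin n, ∫ x, g k (J k).2 x ∂stepLaw η κ ζ P (pathState i J k.castSucc) (J k) := by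
  have := h.isFiniteMeasure_stepLaw
  have hκ : Measurable fun ω (k : Fin n) => κ (k + 1) ω :=
    measurable_pi_lambda _ fun k => h.measurable_sojourn _
  have hpath : MeasurableSet {ω | (fun k : Fin n => (η (k + 1) ω, ζ (k + 1) ω)) = J} :=
    measurable_pi_lambda _ (fun k => (h.measurable_state _).prodMk (h.measurable_mark _))
      (measurableSet_singleton J)
  have hslice (k : Fin n) : Measurable (g k (J k).2) := (hg k).of_uncurry_left
  have hprod : Measurable fun x : Fin n → ℝ => ∏ k : Fin n, g k (J k).2 (x k) :=
    Finset.measurable_prod _ fun k _ => (hslice k).comp (measurable_pi_apply k)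
  rw [← integral_fintype_prod_eq_prod, ← h.map_sojourn_restrict_path,
    integral_map hκ.aemeasurable hprod.aestronglyMeasurable]
  refine setIntegral_congr_fun hpath fun ω hω => ?_
  simp only [mem_ofPred_eq] at hω
  simp only [← hω, Finset.prod_range]

lemma stepMatrix_apply_eq_sum (h : IsMarkovRenewal η κ ζ P Q) {g : Bool → ℝ → ℝ}
    (hg : Measurable (Function.uncurry g)) (hbound : ∀ z x, 0 ≤ x → |g z x| ≤ 1) (i j : X) :
    stepMatrix η κ ζ P g i j = ∑ z, ∫ x, g z x ∂stepLaw η κ ζ P i (j, z) := by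
  rw [stepMatrix, Matrix.of_apply, integral_eq_sum_setIntegral_fiber (h.measurable_mark 1)
    (h.integrable_step hg hbound i 1).integrableOn]
  refine Finset.sum_congr rfl fun z _ => ?_
  have hz : MeasurableSet {ω | ζ 1 ω = z} := h.measurable_mark 1 (measurableSet_singleton z)
  have hj : MeasurableSet {ω | η 1 ω = j} := h.measurable_state 1 (measurableSet_singleton j)
  have hinter : {ω | ζ 1 ω = z} ∩ {ω | η 1 ω = j} = {ω | (η 1 ω, ζ 1 ω) = (j, z)} := by
    ext ω
    simp [and_comm]
  rw [stepLaw, integral_map (h.measurable_sojourn 1).aemeasurable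
    hg.of_uncurry_left.aestronglyMeasurable, Measure.restrict_restrict hz, hinter]
  refine setIntegral_congr_fun (hinter ▸ hz.inter hj) fun ω hω => ?_
  have hmark : ζ 1 ω = z := congrArg Prod.snd hω
  simp only [hmark]

theorem integral_prod_eq_mulVec [Fintype X] [DecidableEq X] (h : IsMarkovRenewal η κ ζ P Q)
    {g : ℕ → Bool → ℝ → ℝ} (hg : ∀ k, Measurable (Function.uncurry (g k)))
    (hbound : ∀ k z x, 0 ≤ x → |g k z x| ≤ 1) (n : ℕ) (i : X) :
    ∫ ω, ∏ k ∈ Finset.range n, g k (ζ (k + 1) ω) (κ (k + 1) ω) ∂P i =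
      (((List.range n).map fun k => stepMatrix η κ ζ P (g k)).prod *ᵥ 1) i := by
  have := h.isProbabilityMeasure i
  have hpath : Measurable fun ω (k : Fin n) => (η (k + 1) ω, ζ (k + 1) ω) :=
    measurable_pi_lambda _ fun k => (h.measurable_state _).prodMk (h.measurable_mark _)
  have hint : Integrable
      (fun ω => ∏ k ∈ Finset.range n, g k (ζ (k + 1) ω) (κ (k + 1) ω)) (P i) := by
    refine Integrable.of_bound (Finset.measurable_prod _ fun k _ =>
      h.measurable_step (hg k) (k + 1)).aestronglyMeasurable 1 (Eventually.of_forall fun ω => ?_)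
    rw [Real.norm_eq_abs, Finset.abs_prod]
    exact Finset.prod_le_one (fun k _ => abs_nonneg _)
      fun k _ => hbound k _ _ (h.sojourn_nonneg _ ω)
  have hmatrix (k) : stepMatrix η κ ζ P (g k) =
      Matrix.of fun i j => ∑ z, ∫ x, g k z x ∂stepLaw η κ ζ P i (j, z) :=
    Matrix.ext fun i j => h.stepMatrix_apply_eq_sum (hg k) (hbound k) i j
  simp only [hmatrix]
  rw [prod_map_range_mulVec_one_eq_sum_path n
      (fun k i y => ∫ x, g k y.2 x ∂stepLaw η κ ζ P i y),
    integral_eq_sum_setIntegral_fiber hpath hint]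
  exact Finset.sum_congr rfl fun J _ => h.setIntegral_path_eq_prod hg i J

end IsMarkovRenewal

end MarkovRenewal

section LaplaceMatrix

/-- The factor contributed by a step with mark `z` and sojourn time `x` to a Laplace transform with
argument `s`; if `kill` is set, a step on which the rare event occurs contributes `0`. -/
def stepWeight (s : ℝ) (kill z : Bool) (x : ℝ) : ℝ :=
  if kill && z then 0 else Real.exp (-(s * x))

lemma measurable_stepWeight (s : ℝ) (kill : Bool) :
    Measurable (Function.uncurry (stepWeight s kill)) := by
  refine measurable_from_prod_countable_right fun z => ?_
  unfold Function.uncurry stepWeight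
  dsimp only
  split_ifs <;> fun_prop

lemma stepWeight_mem_Icc {s : ℝ} (hs : 0 ≤ s) (kill z : Bool) {x : ℝ} (hx : 0 ≤ x) :
    stepWeight s kill z x ∈ Icc (0 : ℝ) 1 := by
  unfold stepWeight
  split_ifs
  · simp
  · exact ⟨(Real.exp_pos _).le, Real.exp_le_one_iff.2 (neg_nonpos.2 (mul_nonneg hs hx))⟩

lemma abs_stepWeight_le_one {s : ℝ} (hs : 0 ≤ s) (kill z : Bool) {x : ℝ} (hx : 0 ≤ x) :
    |stepWeight s kill z x| ≤ 1 :=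
  abs_le.2 ⟨by linarith [(stepWeight_mem_Icc hs kill z hx).1], (stepWeight_mem_Icc hs kill z hx).2⟩

variable {X Ω : Type*} [MeasurableSpace Ω]

/-- The transition matrix of the embedded chain with steps weighted by `stepWeight s kill`. For
`s = 0` and `kill = false` it is the transition matrix itself. -/
def laplaceMatrix (η : ℕ → Ω → X) (κ : ℕ → Ω → ℝ) (ζ : ℕ → Ω → Bool) (P : X → Measure Ω)
    (s : ℝ) (kill : Bool) : Matrix X X ℝ :=
  stepMatrix η κ ζ P (stepWeight s kill)

lemma laplaceMatrix_zero_apply {η : ℕ → Ω → X} {κ : ℕ → Ω → ℝ} {ζ : ℕ → Ω → Bool}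
    {P : X → Measure Ω} (i j : X) :
    laplaceMatrix η κ ζ P 0 false i j = (P i).real {ω | η 1 ω = j} := by
  simp [laplaceMatrix, stepMatrix, stepWeight]

namespace IsMarkovRenewal

variable [MeasurableSpace X] {η : ℕ → Ω → X} {κ : ℕ → Ω → ℝ}
  {ζ : ℕ → Ω → Bool} {P : X → Measure Ω} {Q : X → X → ℝ → Bool → ℝ}

lemma integrable_stepWeight (h : IsMarkovRenewal η κ ζ P Q) {s : ℝ} (hs : 0 ≤ s) (kill : Bool)
    (i : X) : Integrable (fun ω => stepWeight s kill (ζ 1 ω) (κ 1 ω)) (P i) :=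
  h.integrable_step (measurable_stepWeight s kill)
    (fun z _ hx => abs_stepWeight_le_one hs kill z hx) i 1

lemma laplaceMatrix_mem_Icc (h : IsMarkovRenewal η κ ζ P Q) {s : ℝ} (hs : 0 ≤ s) (kill : Bool)
    (i j : X) : laplaceMatrix η κ ζ P s kill i j ∈ Icc 0 (laplaceMatrix η κ ζ P 0 false i j) := by
  refine ⟨integral_nonneg fun ω => (stepWeight_mem_Icc hs kill _ (h.sojourn_nonneg 1 ω)).1,
    integral_mono (h.integrable_stepWeight hs kill i).integrableOn
      (h.integrable_stepWeight le_rfl false i).integrableOn fun ω => ?_⟩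
  simpa [stepWeight] using (stepWeight_mem_Icc hs kill (ζ 1 ω) (h.sojourn_nonneg 1 ω)).2

variable [MeasurableSingletonClass X] [Fintype X]

lemma laplaceMatrix_mulVec_one (h : IsMarkovRenewal η κ ζ P Q) {s : ℝ} (hs : 0 ≤ s) (kill : Bool)
    (i : X) :
    (laplaceMatrix η κ ζ P s kill *ᵥ 1) i = ∫ ω, stepWeight s kill (ζ 1 ω) (κ 1 ω) ∂P i := by
  rw [integral_eq_sum_setIntegral_fiber (h.measurable_state 1) (h.integrable_stepWeight hs kill i)]
  simp [Matrix.mulVec, dotProduct, laplaceMatrix, stepMatrix]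

lemma laplaceMatrix_zero_mem_rowStochastic [DecidableEq X] (h : IsMarkovRenewal η κ ζ P Q) :
    laplaceMatrix η κ ζ P 0 false ∈ Matrix.rowStochastic ℝ X := by
  refine ⟨fun i j => (h.laplaceMatrix_mem_Icc le_rfl false i j).1, funext fun i => ?_⟩
  have := h.isProbabilityMeasure i
  rw [h.laplaceMatrix_mulVec_one le_rfl]
  simp [stepWeight]

end IsMarkovRenewal

end LaplaceMatrix

section RareEventAsymptotics

variable {ι X Ω : Type*} [MeasurableSpace Ω] [Fintype X] [DecidableEq X]
  [MeasurableSpace X] {l : Filter ι} {η : ι → ℕ → Ω → X} {κ : ι → ℕ → Ω → ℝ}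
  {ζ : ι → ℕ → Ω → Bool} {P : ι → X → Measure Ω} {Q : ι → X → X → ℝ → Bool → ℝ}
  {π : ι → X → ℝ} {ρ : ι → ℝ} {A : ℝ → ℝ}

/-- A family of Markov renewal processes with an asymptotically rare event of mean frequency `ρ`
per step: on the time scale of `1 / ρ` steps the sojourn times have cumulant `A`, and the killing at
the rare event adds `1` to it. This is what conditions A, B, C and D₁ provide. -/
structure RareEventAsymptotics (l : Filter ι) (η : ι → ℕ → Ω → X) (κ : ι → ℕ → Ω → ℝ)
    (ζ : ι → ℕ → Ω → Bool) (P : ι → X → Measure Ω) (Q : ι → X → X → ℝ → Bool → ℝ)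
    (π : ι → X → ℝ) (ρ : ι → ℝ) (A : ℝ → ℝ) : Prop where
  isMarkovRenewal : ∀ᶠ ε in l, IsMarkovRenewal (η ε) (κ ε) (ζ ε) (P ε) (Q ε)
  ergodic : UniformlyErgodic l (fun ε => laplaceMatrix (η ε) (κ ε) (ζ ε) (P ε) 0 false) π
  tendsto_rate : Tendsto ρ l (𝓝[>] 0)
  cumulant_zero : A 0 = 0
  tendsto_meanDefect_div : ∀ s, 0 ≤ s → ∀ kill : Bool,
    Tendsto (fun ε => meanDefect (π ε) (laplaceMatrix (η ε) (κ ε) (ζ ε) (P ε) s kill) / ρ ε) l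
      (𝓝 (A s + kill.toNat))

/-- On `Ico (N r) (N (r + 1))`, `r < n`, this is `s r`; elsewhere it is `0`. -/
def windowCoeff (s : ℕ → ℝ) (N : ℕ → ℕ) (n k : ℕ) : ℝ :=
  ∑ r ∈ Finset.range n, if k ∈ Finset.Ico (N r) (N (r + 1)) then s r else 0

lemma windowCoeff_nonneg {s : ℕ → ℝ} {n : ℕ} (hs : ∀ r < n, 0 ≤ s r) (N : ℕ → ℕ) (k : ℕ) :
    0 ≤ windowCoeff s N n k :=
  Finset.sum_nonneg fun r hr => by
    split_ifs
    exacts [hs r (Finset.mem_range.1 hr), le_rfl]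

lemma windowCoeff_eq_zero (s : ℕ → ℝ) {N : ℕ → ℕ} (hN : Monotone N) {n k : ℕ}
    (hk : k ∉ Finset.Ico (N 0) (N n)) : windowCoeff s N n k = 0 := by
  refine Finset.sum_eq_zero fun r hr => if_neg fun hmem => hk ?_
  exact Finset.Ico_subset_Ico (hN r.zero_le) (hN (Finset.mem_range.1 hr)) hmem

lemma windowCoeff_succ_of_lt (s : ℕ → ℝ) {N : ℕ → ℕ} {n k : ℕ} (hk : k < N n) :
    windowCoeff s N (n + 1) k = windowCoeff s N n k := by
  rw [windowCoeff, Finset.sum_range_succ, if_neg (by simp [hk]), add_zero, windowCoeff]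

lemma windowCoeff_succ_of_mem (s : ℕ → ℝ) {N : ℕ → ℕ} (hN : Monotone N) {n k : ℕ}
    (hk : k ∈ Finset.Ico (N n) (N (n + 1))) : windowCoeff s N (n + 1) k = s n := by
  have hprev : windowCoeff s N n k = 0 :=
    windowCoeff_eq_zero s hN fun hmem =>
      ((Finset.mem_Ico.1 hmem).2.trans_le (Finset.mem_Ico.1 hk).1).false
  rw [windowCoeff] at hprev ⊢
  rw [Finset.sum_range_succ, hprev, if_pos hk, zero_add]

lemma prod_map_Ico_ite_lt {M : Type*} [Monoid M] (U V : M) {a b : ℕ} (hab : a ≤ b) (L : ℕ) :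
    ((List.Ico a b).map fun k => if k < L then U else V).prod =
      U ^ (max a (min b L) - a) * V ^ (b - max a (min b L)) := by
  have hconst {a b : ℕ} {u : M} {f : ℕ → M} (hf : ∀ k ∈ List.Ico a b, f k = u) :
      ((List.Ico a b).map f).prod = u ^ (b - a) := by
    rw [List.map_congr_left hf, List.map_const', List.Ico.length, List.prod_replicate]
  rw [← List.Ico.append_consecutive (le_max_left a (min b L)) (max_le hab (min_le_left b L)),
    List.map_append, List.prod_append]
  congr 1
  · exact hconst fun k hk => if_pos (by have := List.Ico.mem.1 hk; omega)
  · exact hconst fun k hk => if_neg (by have := List.Ico.mem.1 hk; omega)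

namespace RareEventAsymptotics

lemma eventually_rate_pos (h : RareEventAsymptotics l η κ ζ P Q π ρ A) : ∀ᶠ ε in l, 0 < ρ ε :=
  h.tendsto_rate.eventually eventually_mem_nhdsWithin

lemma cumulant_nonneg [l.NeBot] (h : RareEventAsymptotics l η κ ζ P Q π ρ A) {s : ℝ}
    (hs : 0 ≤ s) : 0 ≤ A s := by
  have hlim := h.tendsto_meanDefect_div s hs false
  simp only [Bool.toNat_false, Nat.cast_zero, add_zero] at hlim
  refine ge_of_tendsto hlim ?_
  filter_upwards [h.isMarkovRenewal, h.ergodic.stochastic, h.ergodic.mem_stdSimplex,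
    h.eventually_rate_pos] with ε hε hP hπ hρ
  exact div_nonneg ((isSubstochastic_of_le_rowStochastic hP fun i j =>
    hε.laplaceMatrix_mem_Icc hs false i j).meanDefect_mem_Icc hπ).1 hρ.le

lemma tendsto_floor_mul (h : RareEventAsymptotics l η κ ζ P Q π ρ A) {y : ℝ} (hy : 0 ≤ y) :
    Tendsto (fun ε => (⌊y / ρ ε⌋₊ : ℝ) * ρ ε) l (𝓝 y) := by
  have hfloor := (tendsto_nat_floor_mul_div_atTop hy).comp
    (tendsto_inv_nhdsGT_zero.comp h.tendsto_rate)
  simpa only [Function.comp_def, div_inv_eq_mul, ← div_eq_mul_inv] using hfloor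

lemma tendsto_pow_mulVec (h : RareEventAsymptotics l η κ ζ P Q π ρ A) {s : ℝ} (hs : 0 ≤ s)
    (kill : Bool) {N : ι → ℕ} {x : ℝ} (hN : Tendsto (fun ε => (N ε : ℝ) * ρ ε) l (𝓝 x))
    {f : ι → X → ℝ} {c : ℝ} (hf : Tendsto f l (𝓝 fun _ => c)) :
    Tendsto (fun ε => laplaceMatrix (η ε) (κ ε) (ζ ε) (P ε) s kill ^ N ε *ᵥ f ε) l
      (𝓝 fun _ => c * Real.exp (-((A s + kill.toNat) * x))) := by
  have hρ : Tendsto ρ l (𝓝 0) := h.tendsto_rate.mono_right nhdsWithin_le_nhds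
  have hdiv := h.tendsto_meanDefect_div s hs kill
  refine h.ergodic.tendsto_pow_mulVec
    (h.isMarkovRenewal.mono fun ε hε i j => hε.laplaceMatrix_mem_Icc hs kill i j) ?_ ?_ hf
  · refine ((hdiv.mul hρ).congr' (h.eventually_rate_pos.mono fun ε hε =>
      div_mul_cancel₀ _ hε.ne')).trans_eq ?_
    rw [mul_zero]
  · refine ((hdiv.mul hN).congr' (h.eventually_rate_pos.mono fun ε hε => ?_))
    field_simp

lemma tendsto_prod_Ico_mulVec (h : RareEventAsymptotics l η κ ζ P Q π ρ A) {s : ℝ} (hs : 0 ≤ s)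
    {a b L : ι → ℕ} (hab : ∀ᶠ ε in l, a ε ≤ b ε) {α β y : ℝ} (hαβ : α ≤ β)
    (ha : Tendsto (fun ε => (a ε : ℝ) * ρ ε) l (𝓝 α))
    (hb : Tendsto (fun ε => (b ε : ℝ) * ρ ε) l (𝓝 β))
    (hL : Tendsto (fun ε => (L ε : ℝ) * ρ ε) l (𝓝 y))
    {f : ι → X → ℝ} {c : ℝ} (hf : Tendsto f l (𝓝 fun _ => c)) :
    Tendsto (fun ε => ((List.Ico (a ε) (b ε)).map fun k =>
        laplaceMatrix (η ε) (κ ε) (ζ ε) (P ε) s (decide (k < L ε))).prod *ᵥ f ε) l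
      (𝓝 fun _ => c * Real.exp (-(A s * (β - α) + (min β y - min α y)))) := by
  have hmid : Tendsto (fun ε => ((max (a ε) (min (b ε) (L ε)) : ℕ) : ℝ) * ρ ε) l
      (𝓝 (max α (min β y))) := by
    refine (ha.max (hb.min hL)).congr' (h.eventually_rate_pos.mono fun ε hρ => ?_)
    simp only [Nat.cast_max, Nat.cast_min, max_mul_of_nonneg _ _ hρ.le,
      min_mul_of_nonneg _ _ hρ.le]
  have hkilled : Tendsto (fun ε => ((max (a ε) (min (b ε) (L ε)) - a ε : ℕ) : ℝ) * ρ ε) l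
      (𝓝 (max α (min β y) - α)) :=
    (hmid.sub ha).congr fun ε => by rw [Nat.cast_sub (le_max_left _ _), sub_mul]
  have hfree : Tendsto (fun ε => ((b ε - max (a ε) (min (b ε) (L ε)) : ℕ) : ℝ) * ρ ε) l
      (𝓝 (β - max α (min β y))) :=
    (hb.sub hmid).congr' (hab.mono fun ε hab => by
      simp only [Nat.cast_sub (max_le hab (min_le_left _ _)), sub_mul])
  have hexp : max α (min β y) - α = min β y - min α y := by
    grind
  have hlim := h.tendsto_pow_mulVec hs true hkilled (h.tendsto_pow_mulVec hs false hfree hf)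
  rw [mul_assoc, ← Real.exp_add] at hlim
  refine (hlim.congr' (hab.mono fun ε hab => ?_)).trans_eq ?_
  · rw [Matrix.mulVec_mulVec, ← prod_map_Ico_ite_lt _ _ hab]
    congr 3
    ext1 k
    split_ifs with hk <;> simp [hk]
  · rw [← hexp]
    simp only [Bool.toNat_true, Bool.toNat_false, Nat.cast_one, Nat.cast_zero]
    ring_nf

lemma tendsto_prod_windows_mulVec (h : RareEventAsymptotics l η κ ζ P Q π ρ A)
    {N : ι → ℕ → ℕ} (hN : ∀ᶠ ε in l, Monotone (N ε)) {y : ℕ → ℝ} (hy : Monotone y)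
    (hNy : ∀ r, Tendsto (fun ε => (N ε r : ℝ) * ρ ε) l (𝓝 (y r)))
    {L : ι → ℕ} {u : ℝ} (hL : Tendsto (fun ε => (L ε : ℝ) * ρ ε) l (𝓝 u))
    {s : ℕ → ℝ} {n : ℕ} (hs : ∀ r < n, 0 ≤ s r)
    {f : ι → X → ℝ} {c : ℝ} (hf : Tendsto f l (𝓝 fun _ => c)) :
    Tendsto (fun ε => ((List.Ico (N ε 0) (N ε n)).map fun k =>
        laplaceMatrix (η ε) (κ ε) (ζ ε) (P ε) (windowCoeff s (N ε) n k)
          (decide (k < L ε))).prod *ᵥ f ε) l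
      (𝓝 fun _ => c * Real.exp (-(∑ r ∈ Finset.range n, A (s r) * (y (r + 1) - y r)
        + (min (y n) u - min (y 0) u)))) := by
  induction n generalizing f c with
  | zero => simpa using hf
  | succ n ih =>
    have hn : n ≤ n + 1 := n.le_succ
    have hlast := h.tendsto_prod_Ico_mulVec (hs n n.lt_succ_self)
      (hN.mono fun ε hN => hN hn) (hy hn) (hNy n) (hNy (n + 1)) hL hf
    have hlim := ih (fun r hr => hs r (hr.trans n.lt_succ_self)) hlast
    rw [mul_assoc, ← Real.exp_add] at hlim
    refine (hlim.congr' (hN.mono fun ε hN => ?_)).trans_eq ?_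
    · rw [Matrix.mulVec_mulVec, ← List.Ico.append_consecutive (hN n.zero_le) (hN hn),
        List.map_append, List.prod_append]
      congr 3 <;> refine List.map_congr_left fun k hk => ?_
      · rw [windowCoeff_succ_of_lt s (List.Ico.mem.1 hk).2]
      · rw [windowCoeff_succ_of_mem s hN (Finset.mem_Ico.2 (List.Ico.mem.1 hk))]
    · rw [Finset.sum_range_succ]
      ring_nf

lemma tendsto_prod_range_mulVec_one (h : RareEventAsymptotics l η κ ζ P Q π ρ A)
    {N : ι → ℕ → ℕ} (hN : ∀ᶠ ε in l, Monotone (N ε)) {y : ℕ → ℝ} (hy : Monotone y) (hy0 : 0 ≤ y 0)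
    (hNy : ∀ r, Tendsto (fun ε => (N ε r : ℝ) * ρ ε) l (𝓝 (y r)))
    {L : ι → ℕ} {u : ℝ} (hu : 0 ≤ u) (hL : Tendsto (fun ε => (L ε : ℝ) * ρ ε) l (𝓝 u))
    {s : ℕ → ℝ} {n : ℕ} (hs : ∀ r < n, 0 ≤ s r)
    {K : ι → ℕ} (hNK : ∀ ε, N ε n ≤ K ε) {w : ℝ} (hyw : y n ≤ w) (huw : u ≤ w)
    (hK : Tendsto (fun ε => (K ε : ℝ) * ρ ε) l (𝓝 w)) :
    Tendsto (fun ε => ((List.range (K ε)).map fun k =>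
        laplaceMatrix (η ε) (κ ε) (ζ ε) (P ε) (windowCoeff s (N ε) n k)
          (decide (k < L ε))).prod *ᵥ 1) l
      (𝓝 fun _ => Real.exp (-(∑ r ∈ Finset.range n, A (s r) * (y (r + 1) - y r) + u))) := by
  have htail := h.tendsto_prod_Ico_mulVec le_rfl (Eventually.of_forall hNK) hyw (hNy n) hK hL
    (tendsto_const_nhds (x := fun _ : X => (1 : ℝ)))
  have hhead := h.tendsto_prod_Ico_mulVec (a := fun _ => 0) le_rfl
    (Eventually.of_forall fun ε => (N ε 0).zero_le) hy0 (by simp [tendsto_const_nhds]) (hNy 0) hL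
    (h.tendsto_prod_windows_mulVec hN hy hNy hL hs htail)
  rw [one_mul, ← Real.exp_add, ← Real.exp_add] at hhead
  refine (hhead.congr' (hN.mono fun ε hN => ?_)).trans_eq ?_
  · have hzero {a b : ℕ} (hab : b ≤ N ε 0 ∨ N ε n ≤ a) :
        ((List.Ico a b).map fun k => laplaceMatrix (η ε) (κ ε) (ζ ε) (P ε) 0 (decide (k < L ε))) =
          (List.Ico a b).map fun k => laplaceMatrix (η ε) (κ ε) (ζ ε) (P ε)
            (windowCoeff s (N ε) n k) (decide (k < L ε)) :=
      List.map_congr_left fun k hk => by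
        rw [windowCoeff_eq_zero s hN fun hmem => by
          have := List.Ico.mem.1 hk
          have := Finset.mem_Ico.1 hmem
          omega]
    rw [Matrix.mulVec_mulVec, Matrix.mulVec_mulVec, hzero (.inl le_rfl), hzero (.inr le_rfl),
      ← List.prod_append, ← List.prod_append, ← List.map_append, ← List.map_append,
      List.Ico.append_consecutive (N ε 0).zero_le (hN n.zero_le),
      List.Ico.append_consecutive (N ε n).zero_le (hNK ε), List.Ico.zero_bot]
    rfl
  · rw [h.cumulant_zero, min_eq_right huw, min_eq_left hu]
    ring_nf

end RareEventAsymptotics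

end RareEventAsymptotics

section KeyLimit

variable {Ω : Type*}

/-- The time taken by the first `⌊x⌋` steps. -/
def sojournSum (κ : ℕ → Ω → ℝ) (x : ℝ) (ω : Ω) : ℝ :=
  ∑ n ∈ Finset.Icc 1 ⌊x⌋₊, κ n ω

/-- The indicator that the rare event does not occur during the first `⌊x⌋` steps. -/
def survival (ζ : ℕ → Ω → Bool) (x : ℝ) (ω : Ω) : ℝ :=
  ∏ k ∈ Finset.range ⌊x⌋₊, if ζ (k + 1) ω then 0 else 1

/-- The random variable whose mean is the joint Laplace transform, with arguments `s`, of the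
increments of `sojournSum κ` between the step numbers `x 0, …, x n`. -/
def incrementTransform (κ : ℕ → Ω → ℝ) (s : ℕ → ℝ) (n : ℕ) (x : ℕ → ℝ) (ω : Ω) : ℝ :=
  Real.exp (-∑ r ∈ Finset.range n, s r * (sojournSum κ (x (r + 1)) ω - sojournSum κ (x r) ω))

lemma sum_Icc_one_eq_sum_range {M : Type*} [AddCommMonoid M] (f : ℕ → M) (N : ℕ) :
    ∑ k ∈ Finset.Icc 1 N, f k = ∑ k ∈ Finset.range N, f (k + 1) := by
  rw [← Finset.Ico_add_one_right_eq_Icc, Finset.sum_Ico_eq_sum_range]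
  simp [add_comm 1]

lemma sojournSum_sub (κ : ℕ → Ω → ℝ) {x y : ℝ} (hxy : x ≤ y) (ω : Ω) :
    sojournSum κ y ω - sojournSum κ x ω = ∑ k ∈ Finset.Ico ⌊x⌋₊ ⌊y⌋₊, κ (k + 1) ω := by
  rw [sojournSum, sojournSum, sum_Icc_one_eq_sum_range, sum_Icc_one_eq_sum_range,
    Finset.sum_Ico_eq_sub _ (Nat.floor_mono hxy)]

lemma sum_mul_sojournSum_sub_eq (κ : ℕ → Ω → ℝ) {x : ℕ → ℝ} (hx : Monotone x) (s : ℕ → ℝ) (n : ℕ)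
    {K : ℕ} (hK : ⌊x n⌋₊ ≤ K) (ω : Ω) :
    ∑ r ∈ Finset.range n, s r * (sojournSum κ (x (r + 1)) ω - sojournSum κ (x r) ω) =
      ∑ k ∈ Finset.range K, windowCoeff s (fun r => ⌊x r⌋₊) n k * κ (k + 1) ω := by
  simp only [windowCoeff, Finset.sum_mul]
  rw [Finset.sum_comm]
  refine Finset.sum_congr rfl fun r hr => ?_
  have hsub : Finset.Ico ⌊x r⌋₊ ⌊x (r + 1)⌋₊ ⊆ Finset.range K := fun k hk =>
    Finset.mem_range.2 ((Finset.mem_Ico.1 hk).2.trans_le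
      ((Nat.floor_mono (hx (Finset.mem_range.1 hr))).trans hK))
  rw [sojournSum_sub κ (hx r.le_succ), Finset.mul_sum]
  simp only [ite_mul, zero_mul]
  rw [← Finset.sum_filter, Finset.filter_mem_eq_inter, Finset.inter_eq_right.2 hsub]

lemma survival_eq_prod_range (ζ : ℕ → Ω → Bool) {x : ℝ} {K : ℕ} (hK : ⌊x⌋₊ ≤ K) (ω : Ω) :
    survival ζ x ω =
      ∏ k ∈ Finset.range K, if decide (k < ⌊x⌋₊) && ζ (k + 1) ω then 0 else 1 := by
  rw [survival, ← Finset.prod_subset (Finset.range_mono hK)]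
  · exact Finset.prod_congr rfl fun k hk => by simp [Finset.mem_range.1 hk]
  · intro k _ hk
    simp [not_lt.1 (Finset.mem_range.not.1 hk)]

lemma incrementTransform_mul_survival_eq_prod (κ : ℕ → Ω → ℝ) (ζ : ℕ → Ω → Bool) {x : ℕ → ℝ}
    (hx : Monotone x) (s : ℕ → ℝ) (n : ℕ) (u : ℝ) {K : ℕ} (hxK : ⌊x n⌋₊ ≤ K) (huK : ⌊u⌋₊ ≤ K)
    (ω : Ω) :
    incrementTransform κ s n x ω * survival ζ u ω =
      ∏ k ∈ Finset.range K, stepWeight (windowCoeff s (fun r => ⌊x r⌋₊) n k) (decide (k < ⌊u⌋₊))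
        (ζ (k + 1) ω) (κ (k + 1) ω) := by
  rw [incrementTransform, sum_mul_sojournSum_sub_eq κ hx s n hxK,
    survival_eq_prod_range ζ huK, ← Finset.sum_neg_distrib, Real.exp_sum, ← Finset.prod_mul_distrib]
  refine Finset.prod_congr rfl fun k _ => ?_
  rw [stepWeight, mul_ite, mul_zero, mul_one]

variable {ι X : Type*} [MeasurableSpace Ω] [Fintype X] [DecidableEq X] [MeasurableSpace X]
  [MeasurableSingletonClass X] {l : Filter ι} {η : ι → ℕ → Ω → X}
  {κ : ι → ℕ → Ω → ℝ} {ζ : ι → ℕ → Ω → Bool} {P : ι → X → Measure Ω}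
  {Q : ι → X → X → ℝ → Bool → ℝ} {π : ι → X → ℝ} {ρ : ι → ℝ} {A : ℝ → ℝ}

theorem RareEventAsymptotics.tendsto_integral_incrementTransform_mul_survival
    (h : RareEventAsymptotics l η κ ζ P Q π ρ A) {y : ℕ → ℝ} (hy : Monotone y) (hy0 : 0 ≤ y 0)
    {s : ℕ → ℝ} {n : ℕ} (hs : ∀ r < n, 0 ≤ s r) {u : ℝ} (hu : 0 ≤ u) (i : X) :
    Tendsto (fun ε => ∫ ω, incrementTransform (κ ε) s n (fun r => y r / ρ ε) ω *
        survival (ζ ε) (u / ρ ε) ω ∂P ε i) l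
      (𝓝 (Real.exp (-(∑ r ∈ Finset.range n, A (s r) * (y (r + 1) - y r) + u)))) := by
  have hmono : ∀ᶠ ε in l, Monotone fun r => y r / ρ ε :=
    h.eventually_rate_pos.mono fun ε hρ r r' hr => div_le_div_of_nonneg_right (hy hr) hρ.le
  have hyn : 0 ≤ y n := hy0.trans (hy n.zero_le)
  have hfloor (r : ℕ) := h.tendsto_floor_mul (hy0.trans (hy r.zero_le))
  have hlim := h.tendsto_prod_range_mulVec_one (N := fun ε r => ⌊y r / ρ ε⌋₊)
    (K := fun ε => ⌊y n / ρ ε⌋₊ + ⌊u / ρ ε⌋₊)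
    (hmono.mono fun ε hmono => Nat.floor_mono.comp hmono) hy hy0 hfloor hu
    (h.tendsto_floor_mul hu) hs (fun ε => Nat.le_add_right _ _)
    (le_add_of_nonneg_right hu) (le_add_of_nonneg_left hyn)
    (by simpa only [Nat.cast_add, add_mul] using (hfloor n).add (h.tendsto_floor_mul hu))
  refine (tendsto_pi_nhds.1 hlim i).congr' ?_
  filter_upwards [hmono, h.isMarkovRenewal] with ε hmono hε
  simp only [incrementTransform_mul_survival_eq_prod (κ ε) (ζ ε) hmono s n (u / ρ ε)
    (Nat.le_add_right _ _) (Nat.le_add_left _ _)]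
  rw [hε.integral_prod_eq_mulVec (fun k => measurable_stepWeight _ _)
    fun k z x hx => abs_stepWeight_le_one (windowCoeff_nonneg hs _ k) _ z hx]
  rfl

end KeyLimit

section FirstMark

variable {Ω : Type*}

lemma survival_eq_ite (ζ : ℕ → Ω → Bool) (x : ℝ) (ω : Ω) :
    survival ζ x ω = if ∀ k ∈ Finset.range ⌊x⌋₊, ζ (k + 1) ω = false then 1 else 0 := by
  have hswap (b : Bool) : (if b then (0 : ℝ) else 1) = if b = false then 1 else 0 := by
    cases b <;> rfl
  simp only [survival, hswap, Finset.prod_ite_zero, Finset.prod_const_one]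

lemma survival_mem_Icc (ζ : ℕ → Ω → Bool) (x : ℝ) (ω : Ω) :
    survival ζ x ω ∈ Icc (0 : ℝ) 1 := by
  rw [survival_eq_ite]
  split_ifs <;> simp

lemma antitone_survival (ζ : ℕ → Ω → Bool) (ω : Ω) : Antitone fun x => survival ζ x ω := by
  intro x y hxy
  simp only [survival_eq_ite ζ y ω]
  split_ifs with hy
  · rw [survival_eq_ite, if_pos fun k hk => hy k (Finset.range_mono (Nat.floor_mono hxy) hk)]
  · exact (survival_mem_Icc ζ x ω).1

/-- The number of the first step, counted from `1`, on which the rare event occurs, and `0` if there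
is no such step. -/
def firstMark (ζ : ℕ → Ω → Bool) (ω : Ω) : ℕ :=
  sInf {n : ℕ | 1 ≤ n ∧ ζ n ω = true}

lemma firstMark_mem_Icc_of_survival_ne (ζ : ℕ → Ω → Bool) {x y : ℝ} (hxy : x ≤ y) {ω : Ω}
    (hne : survival ζ x ω ≠ survival ζ y ω) : (firstMark ζ ω : ℝ) ∈ Icc x y := by
  obtain ⟨hx, k, hky, hk⟩ : (∀ k < ⌊x⌋₊, ζ (k + 1) ω = false) ∧
      ∃ k < ⌊y⌋₊, ζ (k + 1) ω = true := by
    have hlt := (antitone_survival ζ ω hxy).lt_of_ne hne.symm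
    simp only [survival_eq_ite, Finset.mem_range] at hlt
    by_cases hx : ∀ k < ⌊x⌋₊, ζ (k + 1) ω = false
    · refine ⟨hx, ?_⟩
      by_contra! hy
      simp only [Bool.not_eq_true] at hy
      exact hlt.not_ge (by rw [if_pos hx, if_pos hy])
    · rw [if_neg hx] at hlt
      split_ifs at hlt <;> linarith
  have hmark : k + 1 ∈ {n : ℕ | 1 ≤ n ∧ ζ n ω = true} := ⟨by omega, hk⟩
  obtain ⟨hpos, hfirst⟩ : 1 ≤ firstMark ζ ω ∧ ζ (firstMark ζ ω) ω = true :=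
    Nat.sInf_mem ⟨_, hmark⟩
  constructor
  · by_contra! hlt
    have hle : firstMark ζ ω ≤ ⌊x⌋₊ := Nat.le_floor hlt.le
    have hunmarked := hx (firstMark ζ ω - 1) (by omega)
    rw [Nat.sub_add_cancel hpos, hfirst] at hunmarked
    exact Bool.noConfusion hunmarked
  · have hle : firstMark ζ ω ≤ ⌊y⌋₊ := (Nat.sInf_le hmark).trans hky
    exact (Nat.le_floor_iff' (by omega)).1 hle

lemma measurable_firstMark [MeasurableSpace Ω] {ζ : ℕ → Ω → Bool} (hζ : ∀ n, Measurable (ζ n)) :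
    Measurable (firstMark ζ) := by
  have hmark (n : ℕ) : MeasurableSet {ω | 1 ≤ n ∧ ζ n ω = true} :=
    (MeasurableSet.const _).inter (hζ n (measurableSet_singleton true))
  refine measurable_of_Ioi fun k => ?_
  have hpreimage : firstMark ζ ⁻¹' Ioi k =
      (⋃ n, {ω | 1 ≤ n ∧ ζ n ω = true}) \ ⋃ n ∈ Iic k, {ω | 1 ≤ n ∧ ζ n ω = true} := by
    ext ω
    simp only [mem_preimage, mem_Ioi, Set.mem_sdiff, mem_iUnion, mem_Iic, exists_prop, not_exists,
      not_and]
    constructor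
    · intro hk
      exact ⟨Nat.nonempty_of_pos_sInf (k.zero_le.trans_lt hk),
        fun n hn => Nat.notMem_of_lt_sInf (hn.trans_lt hk)⟩
    · rintro ⟨hne, hk⟩
      by_contra! hle
      exact hk _ hle (Nat.sInf_mem (s := {n | 1 ≤ n ∧ ζ n ω = true}) hne)
  rw [hpreimage]
  exact (MeasurableSet.iUnion hmark).diff
    (MeasurableSet.biUnion (to_countable _) fun n _ => hmark n)

end FirstMark

section IncrementModulus

lemma one_sub_exp_neg_nonneg {x : ℝ} (hx : 0 ≤ x) : 0 ≤ 1 - Real.exp (-x) :=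
  sub_nonneg.2 (Real.exp_le_one_iff.2 (neg_nonpos.2 hx))

lemma one_sub_exp_neg_mono {x y : ℝ} (hxy : x ≤ y) : 1 - Real.exp (-x) ≤ 1 - Real.exp (-y) :=
  sub_le_sub_left (Real.exp_le_exp.2 (neg_le_neg hxy)) 1

lemma one_sub_exp_neg_add_le {x y : ℝ} (hx : 0 ≤ x) (hy : 0 ≤ y) :
    1 - Real.exp (-(x + y)) ≤ (1 - Real.exp (-x)) + (1 - Real.exp (-y)) := by
  rw [neg_add, Real.exp_add]
  linarith [mul_nonneg (one_sub_exp_neg_nonneg hx) (one_sub_exp_neg_nonneg hy)]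

lemma one_sub_exp_neg_sum_le {α : Type*} (S : Finset α) {f : α → ℝ} (hf : ∀ r ∈ S, 0 ≤ f r) :
    1 - Real.exp (-∑ r ∈ S, f r) ≤ ∑ r ∈ S, (1 - Real.exp (-f r)) :=
  Finset.le_sum_of_subadditive_on_pred (fun x => 1 - Real.exp (-x)) (0 ≤ ·) (by simp)
    (fun _ _ hx hy => one_sub_exp_neg_add_le hx hy) (fun _ _ hx hy => add_nonneg hx hy) f hf

lemma abs_exp_neg_sub_exp_neg_le {x y w : ℝ} (hx : 0 ≤ x) (hy : 0 ≤ y) (hxy : |x - y| ≤ w) :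
    |Real.exp (-x) - Real.exp (-y)| ≤ 1 - Real.exp (-w) := by
  wlog hle : x ≤ y generalizing x y
  · rw [abs_sub_comm]
    exact this hy hx (by rwa [abs_sub_comm]) (le_of_not_ge hle)
  calc |Real.exp (-x) - Real.exp (-y)| = Real.exp (-x) * (1 - Real.exp (-(y - x))) := by
        rw [abs_of_nonneg (sub_nonneg.2 (Real.exp_le_exp.2 (neg_le_neg hle))), mul_sub,
          ← Real.exp_add]
        ring_nf
    _ ≤ 1 - Real.exp (-(y - x)) :=
        mul_le_of_le_one_left (one_sub_exp_neg_nonneg (sub_nonneg.2 hle))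
          (Real.exp_le_one_iff.2 (neg_nonpos.2 hx))
    _ ≤ 1 - Real.exp (-w) :=
        one_sub_exp_neg_mono ((neg_sub x y ▸ neg_le_abs (x - y)).trans hxy)

variable {Ω : Type*}

lemma monotone_sojournSum {κ : ℕ → Ω → ℝ} (hκ : ∀ n ω, 0 ≤ κ n ω) (ω : Ω) :
    Monotone fun x => sojournSum κ x ω := fun _ _ hxy =>
  sub_nonneg.1 (sojournSum_sub κ hxy ω ▸ Finset.sum_nonneg fun _ _ => hκ _ ω)

lemma sum_mul_sojournSum_sub_nonneg {κ : ℕ → Ω → ℝ} (hκ : ∀ n ω, 0 ≤ κ n ω) {s : ℕ → ℝ} {n : ℕ}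
    (hs : ∀ r < n, 0 ≤ s r) {x : ℕ → ℝ} (hx : Monotone x) (ω : Ω) :
    0 ≤ ∑ r ∈ Finset.range n, s r * (sojournSum κ (x (r + 1)) ω - sojournSum κ (x r) ω) :=
  Finset.sum_nonneg fun r hr => mul_nonneg (hs r (Finset.mem_range.1 hr))
    (sub_nonneg.2 (monotone_sojournSum hκ ω (hx r.le_succ)))

lemma incrementTransform_mem_Icc {κ : ℕ → Ω → ℝ} (hκ : ∀ n ω, 0 ≤ κ n ω) {s : ℕ → ℝ} {n : ℕ}
    (hs : ∀ r < n, 0 ≤ s r) {x : ℕ → ℝ} (hx : Monotone x) (ω : Ω) :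
    incrementTransform κ s n x ω ∈ Icc (0 : ℝ) 1 :=
  ⟨(Real.exp_pos _).le,
    Real.exp_le_one_iff.2 (neg_nonpos.2 (sum_mul_sojournSum_sub_nonneg hκ hs hx ω))⟩

/-- The factor `exp (-s D)` for the time `D` between the step numbers `x` and `y`. -/
def windowTransform (κ : ℕ → Ω → ℝ) (s x y : ℝ) (ω : Ω) : ℝ :=
  Real.exp (-(s * (sojournSum κ y ω - sojournSum κ x ω)))

/-- A bound for the change of `incrementTransform κ s n (fun r => t r * x)` as `x` varies over
`[a, b]`. -/
def incrementModulus (κ : ℕ → Ω → ℝ) (s : ℕ → ℝ) (n : ℕ) (t : ℕ → ℝ) (a b : ℝ) (ω : Ω) : ℝ :=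
  ∑ r ∈ Finset.range n, ((1 - windowTransform κ (s r) (t (r + 1) * a) (t (r + 1) * b) ω) +
    (1 - windowTransform κ (s r) (t r * a) (t r * b) ω))

theorem abs_incrementTransform_sub_le {κ : ℕ → Ω → ℝ} (hκ : ∀ n ω, 0 ≤ κ n ω) {s : ℕ → ℝ} {n : ℕ}
    (hs : ∀ r < n, 0 ≤ s r) {t : ℕ → ℝ} (ht : Monotone t) (ht0 : 0 ≤ t 0) {a b x : ℝ} (ha : 0 ≤ a)
    (hx : x ∈ Icc a b) (ω : Ω) :
    |incrementTransform κ s n (fun r => t r * x) ω - incrementTransform κ s n (fun r => t r * a) ω|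
      ≤ incrementModulus κ s n t a b ω := by
  set D : ℕ → ℝ := fun r => sojournSum κ (t r * b) ω - sojournSum κ (t r * a) ω
  have hscaled {c : ℝ} (hc : 0 ≤ c) : Monotone fun r => t r * c :=
    fun _ _ hr => mul_le_mul_of_nonneg_right (ht hr) hc
  have htr (r : ℕ) : 0 ≤ t r := ht0.trans (ht r.zero_le)
  have hshift (r : ℕ) : sojournSum κ (t r * x) ω - sojournSum κ (t r * a) ω ∈ Icc 0 (D r) :=
    ⟨sub_nonneg.2 (monotone_sojournSum hκ ω (mul_le_mul_of_nonneg_left hx.1 (htr r))),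
      sub_le_sub_right (monotone_sojournSum hκ ω (mul_le_mul_of_nonneg_left hx.2 (htr r))) _⟩
  have hDnonneg (r : ℕ) : 0 ≤ D r := (hshift r).1.trans (hshift r).2
  have hterm {r : ℕ} (hr : r ∈ Finset.range n) (k : ℕ) : 0 ≤ s r * D k :=
    mul_nonneg (hs r (Finset.mem_range.1 hr)) (hDnonneg k)
  refine (abs_exp_neg_sub_exp_neg_le (w := ∑ r ∈ Finset.range n, (s r * D (r + 1) + s r * D r))
    (sum_mul_sojournSum_sub_nonneg hκ hs (hscaled (ha.trans hx.1)) ω)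
    (sum_mul_sojournSum_sub_nonneg hκ hs (hscaled ha) ω) ?_).trans
    ((one_sub_exp_neg_sum_le _ fun r hr => add_nonneg (hterm hr _) (hterm hr _)).trans
      (Finset.sum_le_sum fun r hr => one_sub_exp_neg_add_le (hterm hr _) (hterm hr _)))
  rw [← Finset.sum_sub_distrib]
  refine (Finset.abs_sum_le_sum_abs _ _).trans (Finset.sum_le_sum fun r hr => ?_)
  rw [← mul_sub, abs_mul, abs_of_nonneg (hs r (Finset.mem_range.1 hr)), ← mul_add]
  refine mul_le_mul_of_nonneg_left ?_ (hs r (Finset.mem_range.1 hr))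
  rw [sub_sub_sub_comm]
  exact abs_sub_le_iff.2 ⟨by linarith [(hshift (r + 1)).2, (hshift r).1, hDnonneg r],
    by linarith [(hshift (r + 1)).1, (hshift r).2, hDnonneg (r + 1)]⟩

/-- The weights `σ j - σ (j + 1)` and `σ J` add up to `1`. -/
lemma abs_sub_sum_range_mul_le {σ c G : ℕ → ℝ} {φ : ℝ} {J : ℕ} (hφ : φ ∈ Icc (0 : ℝ) 1)
    (hσ0 : σ 0 = 1) (hσ : Antitone σ) (hσJ : 0 ≤ σ J)
    (hG : ∀ j < J, σ j ≠ σ (j + 1) → |φ - c j| ≤ G j) :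
    |φ - ∑ j ∈ Finset.range J, c j * (σ j - σ (j + 1))| ≤
      ∑ j ∈ Finset.range J, G j * (σ j - σ (j + 1)) + σ J := by
  have hsplit : φ - ∑ j ∈ Finset.range J, c j * (σ j - σ (j + 1)) =
      ∑ j ∈ Finset.range J, (φ - c j) * (σ j - σ (j + 1)) + φ * σ J := by
    simp only [sub_mul φ]
    rw [Finset.sum_sub_distrib, ← Finset.mul_sum, Finset.sum_range_sub', hσ0]
    ring
  rw [hsplit]
  refine (abs_add_le _ _).trans (add_le_add ((Finset.abs_sum_le_sum_abs _ _).trans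
    (Finset.sum_le_sum fun j hj => ?_)) ?_)
  · rw [abs_mul, abs_of_nonneg (sub_nonneg.2 (hσ j.le_succ))]
    rcases eq_or_ne (σ j) (σ (j + 1)) with heq | hne
    · simp [heq]
    · exact mul_le_mul_of_nonneg_right (hG j (Finset.mem_range.1 hj) hne)
        (sub_nonneg.2 (hσ j.le_succ))
  · rw [abs_of_nonneg (mul_nonneg hφ.1 hσJ)]
    exact mul_le_of_le_one_left hσJ hφ.2

/-- The index `j` with `firstMark ζ ω ∈ [a j, a (j + 1)]` is read off from the survival
indicators. -/
theorem abs_incrementTransform_firstMark_sub_le {κ : ℕ → Ω → ℝ} (hκ : ∀ n ω, 0 ≤ κ n ω)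
    (ζ : ℕ → Ω → Bool) {s : ℕ → ℝ} {n : ℕ} (hs : ∀ r < n, 0 ≤ s r) {t : ℕ → ℝ} (ht : Monotone t)
    (ht0 : 0 ≤ t 0) {a : ℕ → ℝ} (ha : Monotone a) (ha0 : a 0 = 0) (J : ℕ) (ω : Ω) :
    |incrementTransform κ s n (fun r => t r * firstMark ζ ω) ω -
        ∑ j ∈ Finset.range J, incrementTransform κ s n (fun r => t r * a j) ω *
          (survival ζ (a j) ω - survival ζ (a (j + 1)) ω)| ≤
      ∑ j ∈ Finset.range J, incrementModulus κ s n t (a j) (a (j + 1)) ω *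
        (survival ζ (a j) ω - survival ζ (a (j + 1)) ω) + survival ζ (a J) ω :=
  abs_sub_sum_range_mul_le (σ := fun j => survival ζ (a j) ω)
    (incrementTransform_mem_Icc hκ hs
      (fun _ _ hr => mul_le_mul_of_nonneg_right (ht hr) (Nat.cast_nonneg _)) ω)
    (by simp [ha0, survival]) ((antitone_survival ζ ω).comp_monotone ha)
    (survival_mem_Icc ζ _ ω).1 fun j _ hne =>
      abs_incrementTransform_sub_le hκ hs ht ht0 (ha0 ▸ ha j.zero_le)
        (firstMark_mem_Icc_of_survival_ne ζ (ha j.le_succ) hne) ω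

variable [MeasurableSpace Ω] {κ : ℕ → Ω → ℝ} {ζ : ℕ → Ω → Bool}

lemma measurable_survival (hζ : ∀ n, Measurable (ζ n)) (x : ℝ) : Measurable (survival ζ x) :=
  Finset.measurable_fun_prod _ fun k _ =>
    Measurable.ite (hζ (k + 1) (measurableSet_singleton true)) measurable_const measurable_const

lemma measurable_incrementTransform (hκ : ∀ n, Measurable (κ n)) (s : ℕ → ℝ) (n : ℕ) (x : ℕ → ℝ) :
    Measurable (incrementTransform κ s n x) := by
  have hsum (y : ℝ) : Measurable (sojournSum κ y) := Finset.measurable_sum _ fun k _ => hκ k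
  exact Real.measurable_exp.comp (Finset.measurable_sum _ fun r _ =>
    ((hsum _).sub (hsum _)).const_mul _).neg

lemma measurable_incrementTransform_firstMark (hκ : ∀ n, Measurable (κ n))
    (hζ : ∀ n, Measurable (ζ n)) (s : ℕ → ℝ) (n : ℕ) (t : ℕ → ℝ) :
    Measurable fun ω => incrementTransform κ s n (fun r => t r * firstMark ζ ω) ω := by
  have hpair : Measurable fun p : ℕ × Ω => incrementTransform κ s n (fun r => t r * p.1) p.2 :=
    measurable_from_prod_countable_right fun k =>
      measurable_incrementTransform hκ s n fun r => t r * k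
  have hmark : Measurable fun ω => (firstMark ζ ω, ω) :=
    (measurable_firstMark hζ).prodMk measurable_id
  simpa only [Function.comp_def] using hpair.comp hmark

end IncrementModulus

section TendstoMean

variable {ι Ω : Type*} [MeasurableSpace Ω] {l : Filter ι} {μ : ι → Measure Ω} {f g : ι → Ω → ℝ}
  {a b : ℝ}

/-- The means of the random variables `f ε` under `μ ε` exist eventually and converge to `a`. -/
def TendstoMean (l : Filter ι) (μ : ι → Measure Ω) (f : ι → Ω → ℝ) (a : ℝ) : Prop :=
  (∀ᶠ ε in l, Integrable (f ε) (μ ε)) ∧ Tendsto (fun ε => ∫ ω, f ε ω ∂μ ε) l (𝓝 a)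

namespace TendstoMean

lemma add (hf : TendstoMean l μ f a) (hg : TendstoMean l μ g b) :
    TendstoMean l μ (fun ε ω => f ε ω + g ε ω) (a + b) :=
  ⟨hf.1.mp (hg.1.mono fun _ hg hf => hf.add hg),
    (hf.2.add hg.2).congr' (hf.1.mp (hg.1.mono fun _ hg hf => (integral_add hf hg).symm))⟩

lemma sub (hf : TendstoMean l μ f a) (hg : TendstoMean l μ g b) :
    TendstoMean l μ (fun ε ω => f ε ω - g ε ω) (a - b) :=
  ⟨hf.1.mp (hg.1.mono fun _ hg hf => hf.sub hg),
    (hf.2.sub hg.2).congr' (hf.1.mp (hg.1.mono fun _ hg hf => (integral_sub hf hg).symm))⟩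

lemma sum {β : Type*} (S : Finset β) {f : β → ι → Ω → ℝ} {a : β → ℝ}
    (hf : ∀ r ∈ S, TendstoMean l μ (f r) (a r)) :
    TendstoMean l μ (fun ε ω => ∑ r ∈ S, f r ε ω) (∑ r ∈ S, a r) := by
  have hint : ∀ᶠ ε in l, ∀ r ∈ S, Integrable (f r ε) (μ ε) :=
    (Finset.eventually_all S).2 fun r hr => (hf r hr).1
  exact ⟨hint.mono fun _ hint => integrable_finsetSum _ hint,
    (tendsto_finsetSum S fun r hr => (hf r hr).2).congr'
      (hint.mono fun _ hint => (integral_finsetSum S hint).symm)⟩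

theorem of_abs_sub_le {β : Type*} {k : Filter β} [k.NeBot] {g e : β → ι → Ω → ℝ} {α γ : β → ℝ}
    (hf : ∀ᶠ ε in l, Integrable (f ε) (μ ε)) (hg : ∀ m, TendstoMean l μ (g m) (α m))
    (he : ∀ m, TendstoMean l μ (e m) (γ m))
    (hfg : ∀ m, ∀ᶠ ε in l, ∀ ω, |f ε ω - g m ε ω| ≤ e m ε ω)
    (hα : Tendsto α k (𝓝 a)) (hγ : Tendsto γ k (𝓝 0)) : TendstoMean l μ f a := by
  refine ⟨hf, Metric.tendsto_nhds.2 fun d hd => ?_⟩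
  have hd4 : 0 < d / 4 := by positivity
  obtain ⟨m, hαm, hγm⟩ :=
    ((Metric.tendsto_nhds.1 hα _ hd4).and (hγ.eventually (gt_mem_nhds hd4))).exists
  filter_upwards [hf, (hg m).1, (he m).1, hfg m, Metric.tendsto_nhds.1 (hg m).2 _ hd4,
    (he m).2.eventually (gt_mem_nhds (lt_add_of_pos_right (γ m) hd4))] with ε hf hg he hfg hgα heγ
  have hbound : |∫ ω, f ε ω ∂μ ε - ∫ ω, g m ε ω ∂μ ε| ≤ ∫ ω, e m ε ω ∂μ ε := by
    rw [← integral_sub hf hg]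
    exact abs_integral_le_integral_abs.trans (integral_mono (hf.sub hg).abs he hfg)
  rw [Real.dist_eq] at *
  linarith [abs_sub_le (∫ ω, f ε ω ∂μ ε) (∫ ω, g m ε ω ∂μ ε) a,
    abs_sub_le (∫ ω, g m ε ω ∂μ ε) (α m) a]

lemma mixture {X : Type*} [Fintype X] {P : ι → X → Measure Ω} {q : ι → X → ℝ}
    (hf : ∀ i, TendstoMean l (fun ε => P ε i) f a) (hq : ∀ᶠ ε in l, q ε ∈ stdSimplex ℝ X) :
    TendstoMean l (fun ε => ∑ i, ENNReal.ofReal (q ε i) • P ε i) f a := by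
  have hint : ∀ᶠ ε in l, ∀ i, Integrable (f ε) (ENNReal.ofReal (q ε i) • P ε i) :=
    eventually_all.2 fun i => (hf i).1.mono fun ε h => h.smul_measure ENNReal.ofReal_ne_top
  refine ⟨hint.mono fun ε hint => integrable_finsetSum_measure.2 fun i _ => hint i, ?_⟩
  refine Metric.tendsto_nhds.2 fun d hd => ?_
  filter_upwards [hq, hint,
    eventually_all.2 fun i => Metric.tendsto_nhds.1 (hf i).2 _ (half_pos hd)] with ε hq hint hclose
  rw [integral_finsetSum_measure fun i _ => hint i]
  simp only [integral_smul_measure, ENNReal.toReal_ofReal (hq.1 _), smul_eq_mul]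
  exact (abs_dotProduct_sub_le hq fun i => (hclose i).le).trans_lt (half_lt_self hd)

end TendstoMean

end TendstoMean

section Grid

/-- The grid of mesh `1 / (k + 1)`; its points with `j ≤ (k + 1) ^ 2` subdivide `[0, k + 1]`. -/
def gridPoint (k j : ℕ) : ℝ := j / (k + 1)

lemma gridPoint_zero (k : ℕ) : gridPoint k 0 = 0 := by
  simp [gridPoint]

lemma gridPoint_sq (k : ℕ) : gridPoint k ((k + 1) ^ 2) = k + 1 := by
  rw [gridPoint]
  push_cast
  field_simp

lemma monotone_gridPoint (k : ℕ) : Monotone (gridPoint k) := fun _ _ hij =>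
  div_le_div_of_nonneg_right (Nat.cast_le.2 hij) (by positivity)

lemma gridPoint_nonneg (k j : ℕ) : 0 ≤ gridPoint k j := by
  unfold gridPoint
  positivity

lemma gridPoint_succ (k j : ℕ) : gridPoint k (j + 1) = gridPoint k j + (k + 1 : ℝ)⁻¹ := by
  rw [gridPoint, gridPoint, Nat.cast_succ, add_div, one_div]

lemma tendsto_inv_add_one_atTop_nhdsGT_zero :
    Tendsto (fun k : ℕ => (k + 1 : ℝ)⁻¹) atTop (𝓝[>] 0) :=
  tendsto_inv_atTop_nhdsGT_zero.comp
    (tendsto_atTop_add_const_right _ _ tendsto_natCast_atTop_atTop)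

lemma tendsto_exp_neg_mul_add_one {c : ℝ} (hc : 0 < c) :
    Tendsto (fun k : ℕ => Real.exp (-(c * (k + 1)))) atTop (𝓝 0) :=
  Real.tendsto_exp_neg_atTop_nhds_zero.comp
    ((tendsto_atTop_add_const_right _ _ tendsto_natCast_atTop_atTop).const_mul_atTop hc)

lemma tendsto_one_sub_exp_neg_mul_div (c : ℝ) :
    Tendsto (fun δ => (1 - Real.exp (-(c * δ))) / δ) (𝓝[>] 0) (𝓝 c) := by
  have hderiv : HasDerivAt (fun δ => 1 - Real.exp (-(c * δ))) c 0 := by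
    simpa using (((hasDerivAt_id (0 : ℝ)).const_mul c).neg.exp).const_sub 1
  simpa [div_eq_inv_mul] using hderiv.tendsto_slope_zero_right

lemma sum_exp_neg_mul_gridPoint {β : ℝ} (hβ : 0 < β) (k J : ℕ) :
    ∑ j ∈ Finset.range J, Real.exp (-(β * gridPoint k j)) =
      (1 - Real.exp (-(β * gridPoint k J))) / (1 - Real.exp (-(β * (k + 1 : ℝ)⁻¹))) := by
  have hpos : 0 < 1 - Real.exp (-(β * (k + 1 : ℝ)⁻¹)) :=
    sub_pos.2 (Real.exp_lt_one_iff.2 (neg_lt_zero.2 (by positivity)))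
  have htelescope := Finset.sum_range_sub' (fun j => Real.exp (-(β * gridPoint k j))) J
  rw [gridPoint_zero, mul_zero, neg_zero, Real.exp_zero] at htelescope
  rw [eq_div_iff hpos.ne', ← htelescope, Finset.sum_mul]
  refine Finset.sum_congr rfl fun j _ => ?_
  rw [gridPoint_succ, mul_add, neg_add, Real.exp_add, mul_one_sub]

/-- A Riemann–Stieltjes sum for `∫ exp (-Λ x) exp (-x) dx` over the positive half-line. -/
lemma tendsto_sum_exp_neg_mul_gridPoint {Λ : ℝ} (hΛ : 0 ≤ Λ) :
    Tendsto (fun k : ℕ => ∑ j ∈ Finset.range ((k + 1) ^ 2), Real.exp (-(Λ * gridPoint k j)) *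
        (Real.exp (-gridPoint k j) - Real.exp (-gridPoint k (j + 1)))) atTop (𝓝 (1 + Λ)⁻¹) := by
  have hβ : 0 < 1 + Λ := by positivity
  have hmesh := tendsto_inv_add_one_atTop_nhdsGT_zero
  have hratio := ((tendsto_one_sub_exp_neg_mul_div 1).comp hmesh).div
    ((tendsto_one_sub_exp_neg_mul_div (1 + Λ)).comp hmesh) hβ.ne'
  have htail := (tendsto_exp_neg_mul_add_one hβ).const_sub 1
  have hlim := hratio.mul htail
  rw [sub_zero, mul_one, one_div] at hlim
  refine hlim.congr fun k => ?_
  have hterm (j : ℕ) : Real.exp (-(Λ * gridPoint k j)) *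
      (Real.exp (-gridPoint k j) - Real.exp (-gridPoint k (j + 1))) =
        (1 - Real.exp (-(1 * (k + 1 : ℝ)⁻¹))) * Real.exp (-((1 + Λ) * gridPoint k j)) := by
    rw [gridPoint_succ, neg_add, Real.exp_add, one_mul, one_add_mul, neg_add, Real.exp_add]
    ring
  simp only [hterm, ← Finset.mul_sum, sum_exp_neg_mul_gridPoint hβ, gridPoint_sq]
  simp only [Pi.div_apply, Function.comp_apply]
  rw [div_div_div_cancel_right₀ (by positivity)]
  ring

lemma tendsto_gridError {G : ℝ → ℝ} (hG : Tendsto G (𝓝[>] 0) (𝓝 0)) :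
    Tendsto (fun k : ℕ => ∑ j ∈ Finset.range ((k + 1) ^ 2),
        G (gridPoint k (j + 1) - gridPoint k j) *
          (Real.exp (-gridPoint k j) - Real.exp (-gridPoint k (j + 1))) +
        Real.exp (-gridPoint k ((k + 1) ^ 2))) atTop (𝓝 0) := by
  have htail := tendsto_exp_neg_mul_add_one one_pos
  have hlim := ((hG.comp tendsto_inv_add_one_atTop_nhdsGT_zero).mul (htail.const_sub 1)).add htail
  rw [zero_mul, zero_add] at hlim
  refine hlim.congr fun k => ?_
  simp only [gridPoint_succ, add_sub_cancel_left, ← Finset.mul_sum]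
  simp only [← gridPoint_succ, Finset.sum_range_sub' fun j => Real.exp (-gridPoint k j),
    gridPoint_zero, gridPoint_sq, neg_zero, Real.exp_zero, one_mul, Function.comp_apply]

end Grid

section RandomTime

variable {ι X Ω : Type*} [MeasurableSpace Ω] [Fintype X] [DecidableEq X] [MeasurableSpace X]
  [MeasurableSingletonClass X] {l : Filter ι} {η : ι → ℕ → Ω → X}
  {κ : ι → ℕ → Ω → ℝ} {ζ : ι → ℕ → Ω → Bool} {P : ι → X → Measure Ω}
  {Q : ι → X → X → ℝ → Bool → ℝ} {π : ι → X → ℝ} {ρ : ι → ℝ} {A : ℝ → ℝ}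

namespace RareEventAsymptotics

lemma tendstoMean_incrementTransform_mul_survival (h : RareEventAsymptotics l η κ ζ P Q π ρ A)
    {y : ℕ → ℝ} (hy : Monotone y) (hy0 : 0 ≤ y 0) {s : ℕ → ℝ} {n : ℕ} (hs : ∀ r < n, 0 ≤ s r)
    {u : ℝ} (hu : 0 ≤ u) (i : X) :
    TendstoMean l (fun ε => P ε i)
      (fun ε ω => incrementTransform (κ ε) s n (fun r => y r / ρ ε) ω * survival (ζ ε) (u / ρ ε) ω)
      (Real.exp (-(∑ r ∈ Finset.range n, A (s r) * (y (r + 1) - y r) + u))) := by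
  refine ⟨?_, h.tendsto_integral_incrementTransform_mul_survival hy hy0 hs hu i⟩
  filter_upwards [h.isMarkovRenewal, h.eventually_rate_pos] with ε hε hρ
  have := hε.isProbabilityMeasure i
  refine Integrable.of_mem_Icc 0 1 ((measurable_incrementTransform hε.measurable_sojourn s n _).mul
    (measurable_survival hε.measurable_mark _)).aemeasurable (Eventually.of_forall fun ω => ?_)
  exact unitInterval.mul_mem (incrementTransform_mem_Icc hε.sojourn_nonneg hs
    (fun _ _ hr => div_le_div_of_nonneg_right (hy hr) hρ.le) ω) (survival_mem_Icc _ _ ω)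

lemma tendstoMean_survival (h : RareEventAsymptotics l η κ ζ P Q π ρ A) {u : ℝ} (hu : 0 ≤ u)
    (i : X) :
    TendstoMean l (fun ε => P ε i) (fun ε => survival (ζ ε) (u / ρ ε)) (Real.exp (-u)) := by
  simpa [incrementTransform] using h.tendstoMean_incrementTransform_mul_survival (n := 0) (s := 0)
    (y := 0) monotone_const le_rfl (by simp) hu i

lemma tendstoMean_windowTransform_mul_survival (h : RareEventAsymptotics l η κ ζ P Q π ρ A)
    {s x y u : ℝ} (hs : 0 ≤ s) (hx : 0 ≤ x) (hxy : x ≤ y) (hu : 0 ≤ u) (i : X) :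
    TendstoMean l (fun ε => P ε i)
      (fun ε ω => windowTransform (κ ε) s (x / ρ ε) (y / ρ ε) ω * survival (ζ ε) (u / ρ ε) ω)
      (Real.exp (-(A s * (y - x) + u))) := by
  have hmono : Monotone fun k : ℕ => if k = 0 then x else y :=
    monotone_nat_of_le_succ fun k => by split_ifs <;> simp_all
  simpa [incrementTransform, windowTransform] using
    h.tendstoMean_incrementTransform_mul_survival (n := 1) (s := fun _ => s) hmono (by simpa)
      (by simpa) hu i

lemma tendstoMean_incrementModulus_mul_sub (h : RareEventAsymptotics l η κ ζ P Q π ρ A)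
    {s : ℕ → ℝ} {n : ℕ} (hs : ∀ r < n, 0 ≤ s r) {t : ℕ → ℝ} (ht : ∀ r, 0 ≤ t r)
    {a b : ℝ} (ha : 0 ≤ a) (hab : a ≤ b) (i : X) :
    TendstoMean l (fun ε => P ε i)
      (fun ε ω => incrementModulus (κ ε) s n t (a / ρ ε) (b / ρ ε) ω *
        (survival (ζ ε) (a / ρ ε) ω - survival (ζ ε) (b / ρ ε) ω))
      ((∑ r ∈ Finset.range n, ((1 - Real.exp (-(A (s r) * t (r + 1) * (b - a)))) +
        (1 - Real.exp (-(A (s r) * t r * (b - a)))))) * (Real.exp (-a) - Real.exp (-b))) := by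
  have hb : 0 ≤ b := ha.trans hab
  have hwindow {c σ u : ℝ} (hc : 0 ≤ c) (hσ : 0 ≤ σ) (hu : 0 ≤ u) :
      TendstoMean l (fun ε => P ε i)
        (fun ε ω => (1 - windowTransform (κ ε) σ (c * (a / ρ ε)) (c * (b / ρ ε)) ω) *
          survival (ζ ε) (u / ρ ε) ω)
        ((1 - Real.exp (-(A σ * c * (b - a)))) * Real.exp (-u)) := by
    have hwin := h.tendstoMean_windowTransform_mul_survival hσ (mul_nonneg hc ha)
      (mul_le_mul_of_nonneg_left hab hc) hu i
    simp only [neg_add, Real.exp_add, ← mul_sub, ← mul_assoc] at hwin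
    simpa only [← mul_div_assoc, one_sub_mul] using (h.tendstoMean_survival hu i).sub hwin
  have hterm {c σ : ℝ} (hc : 0 ≤ c) (hσ : 0 ≤ σ) := (hwindow hc hσ ha).sub (hwindow hc hσ hb)
  simp only [← mul_sub] at hterm
  simp only [incrementModulus, Finset.sum_mul, add_mul]
  exact TendstoMean.sum _ fun r hr =>
    (hterm (ht _) (hs r (Finset.mem_range.1 hr))).add (hterm (ht _) (hs r (Finset.mem_range.1 hr)))

lemma tendstoMean_incrementTransform_mul_sub (h : RareEventAsymptotics l η κ ζ P Q π ρ A)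
    {s : ℕ → ℝ} {n : ℕ} (hs : ∀ r < n, 0 ≤ s r) {t : ℕ → ℝ} (ht : Monotone t) (ht0 : 0 ≤ t 0)
    {a b : ℝ} (ha : 0 ≤ a) (hab : a ≤ b) (i : X) :
    TendstoMean l (fun ε => P ε i)
      (fun ε ω => incrementTransform (κ ε) s n (fun r => t r * (a / ρ ε)) ω *
        (survival (ζ ε) (a / ρ ε) ω - survival (ζ ε) (b / ρ ε) ω))
      (Real.exp (-((∑ r ∈ Finset.range n, A (s r) * (t (r + 1) - t r)) * a)) *
        (Real.exp (-a) - Real.exp (-b))) := by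
  have hterm {u : ℝ} (hu : 0 ≤ u) :=
    h.tendstoMean_incrementTransform_mul_survival (y := fun r => t r * a)
      (fun _ _ hr => mul_le_mul_of_nonneg_right (ht hr) ha) (mul_nonneg ht0 ha) hs hu i
  simpa only [← sub_mul, ← mul_assoc, ← Finset.sum_mul, mul_div_assoc, neg_add, Real.exp_add,
    ← mul_sub] using (hterm ha).sub (hterm (ha.trans hab))

theorem tendstoMean_incrementTransform_firstMark [l.NeBot]
    (h : RareEventAsymptotics l η κ ζ P Q π ρ A) {s : ℕ → ℝ} {n : ℕ} (hs : ∀ r < n, 0 ≤ s r)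
    {t : ℕ → ℝ} (ht : Monotone t) (ht0 : 0 ≤ t 0) (i : X) :
    TendstoMean l (fun ε => P ε i)
      (fun ε ω => incrementTransform (κ ε) s n (fun r => t r * firstMark (ζ ε) ω) ω)
      (1 + ∑ r ∈ Finset.range n, A (s r) * (t (r + 1) - t r))⁻¹ := by
  have htr (r : ℕ) : 0 ≤ t r := ht0.trans (ht r.zero_le)
  have hΛ : 0 ≤ ∑ r ∈ Finset.range n, A (s r) * (t (r + 1) - t r) :=
    Finset.sum_nonneg fun r hr => mul_nonneg (h.cumulant_nonneg (hs r (Finset.mem_range.1 hr)))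
      (sub_nonneg.2 (ht r.le_succ))
  have hG : Tendsto (fun δ => ∑ r ∈ Finset.range n,
      ((1 - Real.exp (-(A (s r) * t (r + 1) * δ))) + (1 - Real.exp (-(A (s r) * t r * δ)))))
      (𝓝[>] 0) (𝓝 0) :=
    (Continuous.tendsto' (by fun_prop) 0 0 (by simp)).mono_left nhdsWithin_le_nhds
  have hcenter (k : ℕ) := TendstoMean.sum (Finset.range ((k + 1) ^ 2)) fun j _ =>
    h.tendstoMean_incrementTransform_mul_sub hs ht ht0 (gridPoint_nonneg k j)
      (monotone_gridPoint k (Nat.le_add_right j 1)) i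
  have herror (k : ℕ) := (TendstoMean.sum (Finset.range ((k + 1) ^ 2)) fun j _ =>
    h.tendstoMean_incrementModulus_mul_sub hs htr (gridPoint_nonneg k j)
      (monotone_gridPoint k (Nat.le_add_right j 1)) i).add
    (h.tendstoMean_survival (gridPoint_nonneg k ((k + 1) ^ 2)) i)
  have herror_zero := tendsto_gridError hG
  refine TendstoMean.of_abs_sub_le ?_ hcenter herror ?_ (tendsto_sum_exp_neg_mul_gridPoint hΛ)
    herror_zero
  · filter_upwards [h.isMarkovRenewal] with ε hε
    have := hε.isProbabilityMeasure i
    exact Integrable.of_mem_Icc 0 1 (measurable_incrementTransform_firstMark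
      hε.measurable_sojourn hε.measurable_mark s n t).aemeasurable
      (Eventually.of_forall fun ω => incrementTransform_mem_Icc hε.sojourn_nonneg hs
        (fun _ _ hr => mul_le_mul_of_nonneg_right (ht hr) (Nat.cast_nonneg _)) ω)
  · intro k
    filter_upwards [h.isMarkovRenewal, h.eventually_rate_pos] with ε hε hρ ω
    exact abs_incrementTransform_firstMark_sub_le hε.sojourn_nonneg (ζ ε) hs ht ht0
      (a := fun j => gridPoint k j / ρ ε)
      (fun _ _ hj => div_le_div_of_nonneg_right (monotone_gridPoint k hj) hρ.le)
      (by simp [gridPoint_zero]) _ ω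

end RareEventAsymptotics

end RandomTime

section Conditions

variable {X Ω : Type*} [MeasurableSpace Ω]

/-- The probability, from each starting state, that the rare event occurs at the first step. -/
def markProb (P : X → Measure Ω) (ζ : ℕ → Ω → Bool) (i : X) : ℝ :=
  (P i).real {ω | ζ 1 ω = true}

/-- The mean loss `E_i[1 - exp (-s κ₁); ζ₁ = 1]` on a first step on which the rare event occurs. -/
def markLoss (P : X → Measure Ω) (κ : ℕ → Ω → ℝ) (ζ : ℕ → Ω → Bool) (s : ℝ) (i : X) : ℝ :=
  ∫ ω in {ω | ζ 1 ω = true}, (1 - Real.exp (-(s * κ 1 ω))) ∂P i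

lemma markProb_nonneg (P : X → Measure Ω) (ζ : ℕ → Ω → Bool) (i : X) : 0 ≤ markProb P ζ i :=
  measureReal_nonneg

namespace IsMarkovRenewal

variable [MeasurableSpace X] {η : ℕ → Ω → X} {κ : ℕ → Ω → ℝ}
  {ζ : ℕ → Ω → Bool} {P : X → Measure Ω} {Q : X → X → ℝ → Bool → ℝ}

lemma markLoss_nonneg (h : IsMarkovRenewal η κ ζ P Q) {s : ℝ} (hs : 0 ≤ s) (i : X) :
    0 ≤ markLoss P κ ζ s i :=
  integral_nonneg fun ω => one_sub_exp_neg_nonneg (mul_nonneg hs (h.sojourn_nonneg 1 ω))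

lemma markLoss_le (h : IsMarkovRenewal η κ ζ P Q) {s : ℝ} (hs : 0 ≤ s) {δ : ℝ} (hδ : 0 ≤ δ)
    (i : X) :
    markLoss P κ ζ s i ≤
      s * δ * markProb P ζ i + (P i).real {ω | δ < κ 1 ω ∧ ζ 1 ω = true} := by
  have := h.isProbabilityMeasure i
  have hlate : MeasurableSet {ω | δ < κ 1 ω} := measurableSet_lt measurable_const
    (h.measurable_sojourn 1)
  have hbound (ω : Ω) :
      1 - Real.exp (-(s * κ 1 ω)) ≤ s * δ + {ω | δ < κ 1 ω}.indicator 1 ω := by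
    by_cases hω : δ < κ 1 ω
    · rw [indicator_of_mem (by exact hω), Pi.one_apply]
      linarith [Real.exp_pos (-(s * κ 1 ω)), mul_nonneg hs hδ]
    · rw [indicator_of_notMem (by exact hω), add_zero]
      linarith [Real.one_sub_le_exp_neg (s * κ 1 ω),
        mul_le_mul_of_nonneg_left (not_lt.1 hω) hs]
  have hind : Integrable ({ω | δ < κ 1 ω}.indicator (1 : Ω → ℝ))
      ((P i).restrict {ω | ζ 1 ω = true}) :=
    (integrable_const (1 : ℝ)).indicator hlate
  calc markLoss P κ ζ s i
      ≤ ∫ ω in {ω | ζ 1 ω = true}, (s * δ + {ω | δ < κ 1 ω}.indicator 1 ω) ∂P i := by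
        refine integral_mono_of_nonneg (Eventually.of_forall fun ω =>
          one_sub_exp_neg_nonneg (mul_nonneg hs (h.sojourn_nonneg 1 ω)))
          ((integrable_const _).add hind) (Eventually.of_forall hbound)
    _ = s * δ * markProb P ζ i + (P i).real {ω | δ < κ 1 ω ∧ ζ 1 ω = true} := by
        rw [integral_add (integrable_const _) hind, setIntegral_const, integral_indicator_one hlate,
          measureReal_restrict_apply hlate, smul_eq_mul, mul_comm]
        rfl

lemma markLoss_le_markProb (h : IsMarkovRenewal η κ ζ P Q) {s : ℝ} (hs : 0 ≤ s) (i : X) :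
    markLoss P κ ζ s i ≤ markProb P ζ i := by
  have := h.isProbabilityMeasure i
  have hle := h.markLoss_le hs le_rfl i
  rw [mul_zero, zero_mul, zero_add] at hle
  exact hle.trans (measureReal_mono (ofPred_subset_ofPred.2 fun _ => And.right))

variable [MeasurableSingletonClass X] [Fintype X]

lemma laplaceMatrix_true_mulVec_one (h : IsMarkovRenewal η κ ζ P Q) {s : ℝ} (hs : 0 ≤ s) (i : X) :
    (laplaceMatrix η κ ζ P s true *ᵥ 1) i =
      (laplaceMatrix η κ ζ P s false *ᵥ 1) i - (markProb P ζ i - markLoss P κ ζ s i) := by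
  have := h.isProbabilityMeasure i
  have hmark : MeasurableSet {ω | ζ 1 ω = true} := h.measurable_mark 1 (measurableSet_singleton _)
  have hfree := h.integrable_stepWeight hs false i
  have hsplit (ω : Ω) : stepWeight s true (ζ 1 ω) (κ 1 ω) = stepWeight s false (ζ 1 ω) (κ 1 ω) -
      {ω | ζ 1 ω = true}.indicator (fun ω => stepWeight s false (ζ 1 ω) (κ 1 ω)) ω := by
    by_cases hω : ζ 1 ω = true <;> simp [stepWeight, indicator, hω]
  rw [h.laplaceMatrix_mulVec_one hs, h.laplaceMatrix_mulVec_one hs]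
  simp only [hsplit]
  have hloss : markLoss P κ ζ s i =
      markProb P ζ i - ∫ ω in {ω | ζ 1 ω = true}, stepWeight s false (ζ 1 ω) (κ 1 ω) ∂P i := by
    change ∫ ω in {ω | ζ 1 ω = true}, (1 - stepWeight s false (ζ 1 ω) (κ 1 ω)) ∂P i = _
    rw [integral_sub (integrable_const 1) hfree.integrableOn, setIntegral_const, smul_eq_mul,
      mul_one, markProb]
  rw [integral_sub hfree (hfree.indicator hmark), integral_indicator hmark, hloss, sub_sub_cancel]

lemma meanDefect_laplaceMatrix_true (h : IsMarkovRenewal η κ ζ P Q) {s : ℝ} (hs : 0 ≤ s)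
    (π : X → ℝ) :
    meanDefect π (laplaceMatrix η κ ζ P s true) =
      meanDefect π (laplaceMatrix η κ ζ P s false) +
        (π ⬝ᵥ markProb P ζ - π ⬝ᵥ markLoss P κ ζ s) := by
  have hmul : laplaceMatrix η κ ζ P s true *ᵥ 1 = laplaceMatrix η κ ζ P s false *ᵥ 1 -
      (markProb P ζ - markLoss P κ ζ s) := funext (h.laplaceMatrix_true_mulVec_one hs)
  rw [meanDefect, hmul, meanDefect, ← dotProduct_sub, ← dotProduct_add, ← sub_add]

end IsMarkovRenewal

variable {ι : Type*} {l : Filter ι} {κ : ι → ℕ → Ω → ℝ}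
  {ζ : ι → ℕ → Ω → Bool} {P : ι → X → Measure Ω} {π : ι → X → ℝ}

lemma UniformlyErgodic.tendsto_dotProduct_markProb [Fintype X] [DecidableEq X]
    {T : ι → Matrix X X ℝ}
    (h : UniformlyErgodic l T π) (hpos : ∀ᶠ ε in l, ∃ i, 0 < markProb (P ε) (ζ ε) i)
    (hzero : ∀ i, Tendsto (fun ε => markProb (P ε) (ζ ε) i) l (𝓝 0)) :
    Tendsto (fun ε => π ε ⬝ᵥ markProb (P ε) (ζ ε)) l (𝓝[>] 0) := by
  obtain ⟨c, hc, hcπ⟩ := h.exists_pos_le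
  refine tendsto_nhdsWithin_iff.2 ⟨?_, ?_⟩
  · refine squeeze_zero' (h.mem_stdSimplex.mono fun ε hπ => ?_)
      (h.mem_stdSimplex.mono fun ε hπ => ?_)
      (by simpa using tendsto_finsetSum Finset.univ fun i _ => hzero i)
    · exact Finset.sum_nonneg fun i _ => mul_nonneg (hπ.1 i) (markProb_nonneg _ _ i)
    · exact Finset.sum_le_sum fun i _ =>
        mul_le_of_le_one_left (markProb_nonneg _ _ i) (mem_Icc_of_mem_stdSimplex hπ i).2
  · filter_upwards [hcπ, hpos] with ε hcπ hpos
    obtain ⟨i, hi⟩ := hpos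
    have hπ (j : X) : 0 ≤ π ε j := hc.le.trans (hcπ j)
    exact Finset.sum_pos' (fun j _ => mul_nonneg (hπ j) (markProb_nonneg _ _ j))
      ⟨i, Finset.mem_univ i, mul_pos (hc.trans_le (hcπ i)) hi⟩

variable [MeasurableSpace X] {η : ι → ℕ → Ω → X} {Q : ι → X → X → ℝ → Bool → ℝ}

lemma tendsto_markLoss_div_markProb (h : ∀ᶠ ε in l, IsMarkovRenewal (η ε) (κ ε) (ζ ε) (P ε) (Q ε))
    {i : X} (hC : ∀ δ > 0, Tendsto (fun ε =>
      (P ε i).real {ω | δ < κ ε 1 ω ∧ ζ ε 1 ω = true} / markProb (P ε) (ζ ε) i) l (𝓝 0))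
    {s : ℝ} (hs : 0 ≤ s) :
    Tendsto (fun ε => markLoss (P ε) (κ ε) (ζ ε) s i / markProb (P ε) (ζ ε) i) l (𝓝 0) := by
  refine Metric.tendsto_nhds.2 fun d hd => ?_
  obtain ⟨δ, hδ, hsδ⟩ := exists_pos_mul_lt (half_pos hd) s
  filter_upwards [h, (hC δ hδ).eventually (gt_mem_nhds (half_pos hd))] with ε hε hlate
  have hprob := markProb_nonneg (P ε) (ζ ε) i
  rw [Real.dist_0_eq_abs, abs_of_nonneg (div_nonneg (hε.markLoss_nonneg hs i) hprob)]
  calc markLoss (P ε) (κ ε) (ζ ε) s i / markProb (P ε) (ζ ε) i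
      ≤ s * δ * markProb (P ε) (ζ ε) i / markProb (P ε) (ζ ε) i +
          (P ε i).real {ω | δ < κ ε 1 ω ∧ ζ ε 1 ω = true} / markProb (P ε) (ζ ε) i := by
        rw [← add_div]
        exact div_le_div_of_nonneg_right (hε.markLoss_le hs hδ.le i) hprob
    _ < d / 2 + d / 2 :=
        add_lt_add (lt_of_le_of_lt (by
          rw [mul_div_assoc]
          exact mul_le_of_le_one_right (mul_nonneg hs hδ.le) (div_self_le_one _)) hsδ) hlate
    _ = d := add_halves d

lemma tendsto_dotProduct_markLoss_div [Fintype X]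
    (h : ∀ᶠ ε in l, IsMarkovRenewal (η ε) (κ ε) (ζ ε) (P ε) (Q ε))
    (hπ : ∀ᶠ ε in l, π ε ∈ stdSimplex ℝ X)
    (hC : ∀ i, ∀ δ > 0, Tendsto (fun ε =>
      (P ε i).real {ω | δ < κ ε 1 ω ∧ ζ ε 1 ω = true} / markProb (P ε) (ζ ε) i) l (𝓝 0))
    {s : ℝ} (hs : 0 ≤ s) :
    Tendsto (fun ε => (π ε ⬝ᵥ markLoss (P ε) (κ ε) (ζ ε) s) / (π ε ⬝ᵥ markProb (P ε) (ζ ε))) l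
      (𝓝 0) := by
  refine squeeze_zero' (g := fun ε => ∑ i, markLoss (P ε) (κ ε) (ζ ε) s i / markProb (P ε) (ζ ε) i)
    ?_ ?_ (by simpa using
      tendsto_finsetSum Finset.univ fun i _ => tendsto_markLoss_div_markProb h (hC i) hs)
  · filter_upwards [h, hπ] with ε hε hπ
    exact div_nonneg (dotProduct_nonneg_of_nonneg hπ.1 (hε.markLoss_nonneg hs))
      (dotProduct_nonneg_of_nonneg hπ.1 (markProb_nonneg _ _))
  · filter_upwards [h, hπ] with ε hε hπ
    have hterm (i : X) : 0 ≤ π ε i * markProb (P ε) (ζ ε) i :=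
      mul_nonneg (hπ.1 i) (markProb_nonneg _ _ i)
    have hratio (i : X) : 0 ≤ markLoss (P ε) (κ ε) (ζ ε) s i / markProb (P ε) (ζ ε) i :=
      div_nonneg (hε.markLoss_nonneg hs i) (markProb_nonneg _ _ i)
    have hcancel (i : X) : markLoss (P ε) (κ ε) (ζ ε) s i / markProb (P ε) (ζ ε) i *
        markProb (P ε) (ζ ε) i = markLoss (P ε) (κ ε) (ζ ε) s i :=
      div_mul_cancel_of_imp fun hi =>
        le_antisymm ((hε.markLoss_le_markProb hs i).trans hi.le) (hε.markLoss_nonneg hs i)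
    refine div_le_of_le_mul₀ (Finset.sum_nonneg fun i _ => hterm i)
      (Finset.sum_nonneg fun i _ => hratio i) ?_
    rw [dotProduct, Finset.sum_mul]
    refine Finset.sum_le_sum fun i _ => ?_
    calc π ε i * markLoss (P ε) (κ ε) (ζ ε) s i
        = markLoss (P ε) (κ ε) (ζ ε) s i / markProb (P ε) (ζ ε) i *
            (π ε i * markProb (P ε) (ζ ε) i) := by rw [mul_left_comm, hcancel]
      _ ≤ markLoss (P ε) (κ ε) (ζ ε) s i / markProb (P ε) (ζ ε) i *
            (π ε ⬝ᵥ markProb (P ε) (ζ ε)) :=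
          mul_le_mul_of_nonneg_left (Finset.single_le_sum
            (f := fun j => π ε j * markProb (P ε) (ζ ε) j) (fun j _ => hterm j)
            (Finset.mem_univ i)) (hratio i)

variable [Fintype X] [DecidableEq X] [MeasurableSingletonClass X] {A : ℝ → ℝ}

theorem rareEventAsymptotics_of_conditions
    (h : ∀ᶠ ε in l, IsMarkovRenewal (η ε) (κ ε) (ζ ε) (P ε) (Q ε))
    (herg : UniformlyErgodic l (fun ε => laplaceMatrix (η ε) (κ ε) (ζ ε) (P ε) 0 false) π)
    (hpos : ∀ᶠ ε in l, ∃ i, 0 < markProb (P ε) (ζ ε) i)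
    (hzero : ∀ i, Tendsto (fun ε => markProb (P ε) (ζ ε) i) l (𝓝 0))
    (hC : ∀ i, ∀ δ > 0, Tendsto (fun ε =>
      (P ε i).real {ω | δ < κ ε 1 ω ∧ ζ ε 1 ω = true} / markProb (P ε) (ζ ε) i) l (𝓝 0))
    (hD : ∀ s > 0, Tendsto (fun ε =>
      meanDefect (π ε) (laplaceMatrix (η ε) (κ ε) (ζ ε) (P ε) s false) /
        (π ε ⬝ᵥ markProb (P ε) (ζ ε))) l (𝓝 (A s))) :
    RareEventAsymptotics l η κ ζ P Q π (fun ε => π ε ⬝ᵥ markProb (P ε) (ζ ε))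
      (Function.update A 0 0) := by
  have hrate := herg.tendsto_dotProduct_markProb hpos hzero
  have hfree (s : ℝ) (hs : 0 ≤ s) : Tendsto (fun ε =>
      meanDefect (π ε) (laplaceMatrix (η ε) (κ ε) (ζ ε) (P ε) s false) /
        (π ε ⬝ᵥ markProb (P ε) (ζ ε))) l (𝓝 (Function.update A 0 0 s)) := by
    rcases hs.eq_or_lt with rfl | hs
    · rw [Function.update_self]
      refine tendsto_const_nhds.congr' ?_
      filter_upwards [herg.stochastic] with ε hP
      rw [meanDefect, Matrix.one_vecMul_of_mem_rowStochastic hP, sub_self, dotProduct_zero,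
        zero_div]
    · rw [Function.update_of_ne hs.ne']
      exact hD s hs
  refine ⟨h, herg, hrate, Function.update_self .., fun s hs kill => ?_⟩
  cases kill with
  | false => simpa using hfree s hs
  | true =>
    have hsum := (hfree s hs).add
      ((tendsto_dotProduct_markLoss_div h herg.mem_stdSimplex hC hs).const_sub 1)
    rw [sub_zero] at hsum
    simp only [Bool.toNat_true, Nat.cast_one]
    refine hsum.congr' ?_
    filter_upwards [h, hrate.eventually eventually_mem_nhdsWithin] with ε hε hρ
    rw [hε.meanDefect_laplaceMatrix_true hs, add_div, sub_div, div_self (ne_of_gt hρ)]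

end Conditions

section Application

variable {m : ℕ}

lemma CondB.congr {p p' : ℝ → Fin m → Fin m → ℝ} (hB : CondB p) (h : p =ᶠ[𝓝[>] 0] p') :
    CondB p' := by
  obtain ⟨N, hN, c, hring, hcover, hliminf⟩ := hB
  exact ⟨N, hN, c, hring, hcover, fun k hk =>
    (liminf_congr (h.mono fun ε hε => by rw [hε])).subst (hliminf k hk)⟩

lemma CondB.persistentlyConnected {p : ℝ → Matrix (Fin m) (Fin m) ℝ} (hB : CondB p)
    (hp : ∀ᶠ ε in 𝓝[>] 0, ∀ i j, 0 ≤ p ε i j) : PersistentlyConnected (𝓝[>] 0) p := by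
  obtain ⟨N, -, c, hring, hcover, hliminf⟩ := hB
  have hedge (k : ℕ) (hk : k < N) : PersistentEdge (𝓝[>] 0) p (c k) (c (k + 1)) := by
    obtain ⟨a, ha, hlt⟩ := exists_between (hliminf k hk)
    exact ⟨a, ha, (eventually_lt_of_lt_liminf hlt
      ⟨0, hp.mono fun ε hp => hp _ _⟩).mono fun _ => le_of_lt⟩
  have hpath {a b : ℕ} (hab : a ≤ b) (hb : b ≤ N) :
      Relation.ReflTransGen (PersistentEdge (𝓝[>] 0) p) (c a) (c b) :=
    (reflTransGen_of_succ_of_le (fun a b => PersistentEdge (𝓝[>] 0) p (c a) (c b))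
      (fun k hk => hedge k (hk.2.trans_le hb)) hab).lift c fun _ _ => id
  intro u v
  obtain ⟨a, ha, rfl⟩ := hcover u
  obtain ⟨b, hb, rfl⟩ := hcover v
  exact (hring ▸ hpath ha le_rfl).trans (hpath b.zero_le hb)

lemma IsStationaryDist.mem_stdSimplex {p : Matrix (Fin m) (Fin m) ℝ} {π : Fin m → ℝ}
    (h : IsStationaryDist p π) : π ∈ stdSimplex ℝ (Fin m) :=
  ⟨h.1, h.2.1⟩

lemma IsStationaryDist.vecMul_eq {p : Matrix (Fin m) (Fin m) ℝ} {π : Fin m → ℝ}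
    (h : IsStationaryDist p π) : π ᵥ* p = π :=
  funext fun j => (h.2.2 j).symm

lemma CondB.uniformlyErgodic {p : ℝ → Matrix (Fin m) (Fin m) ℝ} (hB : CondB p)
    (hp : ∀ᶠ ε in 𝓝[>] 0, p ε ∈ Matrix.rowStochastic ℝ (Fin m)) {π : ℝ → Fin m → ℝ}
    (hπ : ∀ᶠ ε in 𝓝[>] 0, IsStationaryDist (p ε) (π ε)) : UniformlyErgodic (𝓝[>] 0) p π where
  connected := hB.persistentlyConnected
    (hp.mono fun _ hp _ _ => Matrix.nonneg_of_mem_rowStochastic hp)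
  stochastic := hp
  mem_stdSimplex := hπ.mono fun _ => IsStationaryDist.mem_stdSimplex
  stationary := hπ.mono fun _ => IsStationaryDist.vecMul_eq

variable {Ω : Type} [MeasurableSpace Ω]

variable {η : ℝ → ℕ → Ω → Fin m} {κ : ℝ → ℕ → Ω → ℝ} {ζ : ℝ → ℕ → Ω → Bool}
  {P : ℝ → Fin m → Measure Ω} {π : ℝ → Fin m → ℝ}

lemma meanDefect_laplaceMatrix_eq_one_sub_lapPhi {Q : Fin m → Fin m → ℝ → Bool → ℝ} {ε : ℝ}
    (h : IsMarkovRenewal (η ε) (κ ε) (ζ ε) (P ε) Q) (hπ : π ε ∈ stdSimplex ℝ (Fin m))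
    {s : ℝ} (hs : 0 ≤ s) :
    meanDefect (π ε) (laplaceMatrix (η ε) (κ ε) (ζ ε) (P ε) s false) = 1 - lapPhi P κ π ε s := by
  have hmul : laplaceMatrix (η ε) (κ ε) (ζ ε) (P ε) s false *ᵥ 1 =
      fun i => ∫ ω, Real.exp (-(s * κ ε 1 ω)) ∂P ε i :=
    funext fun i => by simp [h.laplaceMatrix_mulVec_one hs, stepWeight]
  rw [meanDefect, dotProduct_sub, dotProduct_one, hπ.2, hmul]
  rfl

lemma monotone_comp_min {α : Type*} [Preorder α] {t : ℕ → α} {n : ℕ}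
    (ht : ∀ r < n, t r ≤ t (r + 1)) : Monotone fun r => t (min r n) := by
  refine monotone_nat_of_le_succ fun r => ?_
  rcases lt_or_ge r n with hr | hr
  · simpa only [min_eq_left hr.le, min_eq_left (Nat.succ_le_of_lt hr)] using ht r hr
  · rw [min_eq_right hr, min_eq_right (hr.trans r.le_succ)]

lemma incrementTransform_mul_firstMark_eq {Ω : Type} (κ : ℝ → ℕ → Ω → ℝ) (ζ : ℝ → ℕ → Ω → Bool)
    (ε : ℝ) (s t : ℕ → ℝ) (n : ℕ) (ω : Ω) :
    incrementTransform (κ ε) (fun r => s (r + 1)) n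
        (fun r => t (min r n) * firstMark (ζ ε) ω) ω =
      Real.exp (-∑ r ∈ Finset.Icc 1 n,
        s r * (xiProc κ ζ ε (t r) ω - xiProc κ ζ ε (t (r - 1)) ω)) := by
  rw [incrementTransform, sum_Icc_one_eq_sum_range]
  congr 2
  refine Finset.sum_congr rfl fun r hr => ?_
  have hr := Finset.mem_range.1 hr
  rw [min_eq_left hr.le, min_eq_left (Nat.succ_le_of_lt hr), Nat.add_sub_cancel]
  rfl

lemma RareEventAsymptotics.tendsto_integral_exp_neg_sum_xiProc {l : Filter ℝ} [l.NeBot]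
    {Q : ℝ → Fin m → Fin m → ℝ → Bool → ℝ} {ρ : ℝ → ℝ} {A : ℝ → ℝ}
    (h : RareEventAsymptotics l η κ ζ P Q π ρ A) {q : ℝ → Fin m → ℝ} {μ : ℝ → Measure Ω}
    (hq : ∀ᶠ ε in l, q ε ∈ stdSimplex ℝ (Fin m))
    (hμ : ∀ᶠ ε in l, μ ε = ∑ i, ENNReal.ofReal (q ε i) • P ε i) {n : ℕ} {t : ℕ → ℝ}
    (ht0 : 0 ≤ t 0) (ht : ∀ r < n, t r ≤ t (r + 1)) {s : ℕ → ℝ}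
    (hs : ∀ r, 1 ≤ r → r ≤ n → 0 ≤ s r) :
    Tendsto (fun ε => ∫ ω, Real.exp (-∑ r ∈ Finset.Icc 1 n,
        s r * (xiProc κ ζ ε (t r) ω - xiProc κ ζ ε (t (r - 1)) ω)) ∂μ ε) l
      (𝓝 (1 + ∑ r ∈ Finset.Icc 1 n, A (s r) * (t r - t (r - 1)))⁻¹) := by
  have hlim := TendstoMean.mixture (fun i => h.tendstoMean_incrementTransform_firstMark
    (s := fun r => s (r + 1)) (fun r hr => hs (r + 1) r.succ_pos hr)
    (monotone_comp_min ht) (by simpa using ht0) i) hq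
  have hsum : ∑ r ∈ Finset.range n, A (s (r + 1)) * (t (min (r + 1) n) - t (min r n)) =
      ∑ r ∈ Finset.Icc 1 n, A (s r) * (t r - t (r - 1)) := by
    rw [sum_Icc_one_eq_sum_range]
    refine Finset.sum_congr rfl fun r hr => ?_
    have hr := Finset.mem_range.1 hr
    rw [min_eq_left hr.le, min_eq_left (Nat.succ_le_of_lt hr), Nat.add_sub_cancel]
  rw [hsum] at hlim
  refine hlim.2.congr' ?_
  filter_upwards [hμ] with ε hμ
  simp only [hμ, incrementTransform_mul_firstMark_eq]

end Application

theorem stmt8_general {m : ℕ} (ε₀ : ℝ) (hε₀ : 0 < ε₀)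
    {Ω : Type} [MeasurableSpace Ω]
    (η : ℝ → ℕ → Ω → Fin m) (κ : ℝ → ℕ → Ω → ℝ) (ζ : ℝ → ℕ → Ω → Bool)
    (Pstart : ℝ → Fin m → Measure Ω)
    (hprob : ∀ ε i, IsProbabilityMeasure (Pstart ε i))
    (hmeas : ∀ ε n, Measurable (η ε n) ∧ Measurable (κ ε n) ∧ Measurable (ζ ε n))
    (hκnn : ∀ ε n ω, 0 ≤ κ ε n ω)
    (Q : ℝ → Fin m → Fin m → ℝ → Bool → ℝ)
    (hMRP : ∀ ε ∈ Ioc (0 : ℝ) ε₀, ∀ n : ℕ, ∀ I : ℕ → Fin m, ∀ T : ℕ → ℝ, ∀ Z : ℕ → Bool,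
      Pstart ε (I 0)
          {ω | ∀ k ≤ n, (η ε k ω = I k ∧ (1 ≤ k → (κ ε k ω ≤ T k ∧ ζ ε k ω = Z k)))}
        = ENNReal.ofReal (∏ k ∈ Finset.Icc 1 n, Q ε (I (k - 1)) (I k) (T k) (Z k)))
    (p : ℝ → Fin m → Fin m → ℝ)
    (hp : ∀ ε ∈ Ioc (0 : ℝ) ε₀, ∀ i j, p ε i j = (Pstart ε i {ω | η ε 1 ω = j}).toReal)
    (hB : CondB p)
    (π : ℝ → Fin m → ℝ)
    (hπ : ∀ᶠ ε in 𝓝[>] (0 : ℝ), IsStationaryDist (fun i j => p ε i j) (π ε))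
    (hA1 : ∀ ε ∈ Ioc (0 : ℝ) ε₀, ∃ i, 0 < rareP Pstart ζ ε i)
    (hA2 : ∀ i, Tendsto (fun ε => rareP Pstart ζ ε i) (𝓝[>] (0 : ℝ)) (𝓝 0))
    (hC : ∀ i : Fin m, ∀ δ > 0, Tendsto
      (fun ε => (Pstart ε i {ω | δ < κ ε 1 ω ∧ ζ ε 1 ω = true}).toReal / rareP Pstart ζ ε i)
      (𝓝[>] (0 : ℝ)) (𝓝 0))
    (A : ℝ → ℝ)
    (hD : ∀ s > 0, Tendsto
      (fun ε => (avgRare Pstart ζ π ε)⁻¹ * (1 - lapPhi Pstart κ π ε s))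
      (𝓝[>] (0 : ℝ)) (𝓝 (A s)))
    (q : ℝ → Fin m → ℝ) (Pq : ℝ → Measure Ω)
    (hq : ∀ ε ∈ Ioc (0 : ℝ) ε₀, (∀ i, 0 ≤ q ε i) ∧ ∑ i, q ε i = 1)
    (hmix : ∀ ε ∈ Ioc (0 : ℝ) ε₀, Pq ε = ∑ i, ENNReal.ofReal (q ε i) • Pstart ε i) :
    ∀ n : ℕ, ∀ t : ℕ → ℝ, t 0 = 0 → (∀ r < n, t r ≤ t (r + 1)) →
    ∀ s : ℕ → ℝ, (∀ r, 1 ≤ r → r ≤ n → 0 < s r) →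
    Tendsto
      (fun ε => ∫ ω, Real.exp (-(∑ r ∈ Finset.Icc 1 n,
        s r * (xiProc κ ζ ε (t r) ω - xiProc κ ζ ε (t (r - 1)) ω))) ∂(Pq ε))
      (𝓝[>] (0 : ℝ))
      (𝓝 ((1 + ∑ r ∈ Finset.Icc 1 n, A (s r) * (t r - t (r - 1)))⁻¹)) := by
  have hIoc : ∀ᶠ ε in 𝓝[>] 0, ε ∈ Ioc 0 ε₀ := Ioc_mem_nhdsGT hε₀
  have hMR : ∀ᶠ ε in 𝓝[>] 0, IsMarkovRenewal (η ε) (κ ε) (ζ ε) (Pstart ε) (Q ε) :=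
    hIoc.mono fun ε hε => ⟨hprob ε, fun n => (hmeas ε n).1, fun n => (hmeas ε n).2.1,
      fun n => (hmeas ε n).2.2, hκnn ε, hMRP ε hε⟩
  have hpL : p =ᶠ[𝓝[>] 0] fun ε => laplaceMatrix (η ε) (κ ε) (ζ ε) (Pstart ε) 0 false :=
    hIoc.mono fun ε hε => funext₂ fun i j => (hp ε hε i j).trans
      (laplaceMatrix_zero_apply i j).symm
  have herg := (hB.congr hpL).uniformlyErgodic
    (hMR.mono fun ε hε => hε.laplaceMatrix_zero_mem_rowStochastic)
    (hpL.mp (hπ.mono fun ε hπ hpL => hpL ▸ hπ))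
  have hrare := rareEventAsymptotics_of_conditions (A := A) hMR herg (hIoc.mono hA1) hA2 hC
    fun s hs => (hD s hs).congr' <| by
      filter_upwards [hMR, herg.mem_stdSimplex] with ε hε hπ
      rw [meanDefect_laplaceMatrix_eq_one_sub_lapPhi hε hπ hs.le, div_eq_inv_mul]
      rfl
  intro n t ht0 ht s hs
  have hlim := hrare.tendsto_integral_exp_neg_sum_xiProc (hIoc.mono hq) (hIoc.mono hmix) ht0.ge ht
    fun r hr hrn => (hs r hr hrn).le
  have hA (r : ℕ) (hr : r ∈ Finset.Icc 1 n) : Function.update A 0 0 (s r) = A (s r) :=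
    Function.update_of_ne (hs r (Finset.mem_Icc.1 hr).1 (Finset.mem_Icc.1 hr).2).ne' _ _
  rwa [Finset.sum_congr rfl fun r hr => by rw [hA r hr]] at hlim

/-- Theorem 1 (iii): under conditions A, B, C and D₁ the
first-rare-event-time processes `ξ_ε(·)` converge in finite-dimensional distributions to
`ξ₀(t) = θ₀(tν₀)`, where `θ₀` is a nonnegative Lévy process with
`E e^{−s θ₀(t)} = e^{−tA(s)}` and `ν₀` is an independent exponential random variable
with parameter 1. -/
theorem stmt8 {m : ℕ} (hm : 0 < m) (ε₀ : ℝ) (hε₀ : 0 < ε₀)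
    {Ω : Type} [MeasurableSpace Ω]
    (η : ℝ → ℕ → Ω → Fin m) (κ : ℝ → ℕ → Ω → ℝ) (ζ : ℝ → ℕ → Ω → Bool)
    (Pstart : ℝ → Fin m → Measure Ω)
    (hprob : ∀ ε i, IsProbabilityMeasure (Pstart ε i))
    (hmeas : ∀ ε n, Measurable (η ε n) ∧ Measurable (κ ε n) ∧ Measurable (ζ ε n))
    (hκnn : ∀ ε n ω, 0 ≤ κ ε n ω)
    (Q : ℝ → Fin m → Fin m → ℝ → Bool → ℝ)
    (hMRP : ∀ ε ∈ Ioc (0:ℝ) ε₀, ∀ n : ℕ, ∀ I : ℕ → Fin m, ∀ T : ℕ → ℝ, ∀ Z : ℕ → Bool,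
      Pstart ε (I 0)
          {ω | ∀ k ≤ n, (η ε k ω = I k ∧ (1 ≤ k → (κ ε k ω ≤ T k ∧ ζ ε k ω = Z k)))}
        = ENNReal.ofReal (∏ k ∈ Finset.Icc 1 n, Q ε (I (k - 1)) (I k) (T k) (Z k)))
    (p : ℝ → Fin m → Fin m → ℝ)
    (hp : ∀ ε ∈ Ioc (0:ℝ) ε₀, ∀ i j, p ε i j = (Pstart ε i {ω | η ε 1 ω = j}).toReal)
    (hB : CondB p)
    (π : ℝ → Fin m → ℝ)
    (hπ : ∀ᶠ ε in 𝓝[>] (0:ℝ), IsStationaryDist (fun i j => p ε i j) (π ε))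
    -- condition A
    (hA1 : ∀ ε ∈ Ioc (0:ℝ) ε₀, ∃ i, 0 < rareP Pstart ζ ε i)
    (hA2 : ∀ i, Tendsto (fun ε => rareP Pstart ζ ε i) (𝓝[>] (0:ℝ)) (𝓝 0))
    -- condition C
    (hC : ∀ i : Fin m, ∀ δ > 0, Tendsto
      (fun ε => (Pstart ε i {ω | δ < κ ε 1 ω ∧ ζ ε 1 ω = true}).toReal / rareP Pstart ζ ε i)
      (𝓝[>] (0:ℝ)) (𝓝 0))
    -- condition D₁, with v_ε = p_ε⁻¹
    (A : ℝ → ℝ)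
    (hD : ∀ s > 0, Tendsto
      (fun ε => (avgRare Pstart ζ π ε)⁻¹ * (1 - lapPhi Pstart κ π ε s))
      (𝓝[>] (0:ℝ)) (𝓝 (A s)))
    (hApos : ∀ s > 0, 0 < A s)
    (hA0 : Tendsto A (𝓝[>] (0:ℝ)) (𝓝 0))
    -- arbitrary family of initial distributions
    (q : ℝ → Fin m → ℝ) (Pq : ℝ → Measure Ω)
    (hq : ∀ ε ∈ Ioc (0:ℝ) ε₀, (∀ i, 0 ≤ q ε i) ∧ ∑ i, q ε i = 1)
    (hmix : ∀ ε ∈ Ioc (0:ℝ) ε₀, Pq ε = ∑ i, ENNReal.ofReal (q ε i) • Pstart ε i) :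
    ∀ n : ℕ, ∀ t : ℕ → ℝ, t 0 = 0 → (∀ r < n, t r ≤ t (r + 1)) →
    ∀ s : ℕ → ℝ, (∀ r, 1 ≤ r → r ≤ n → 0 < s r) →
    Tendsto
      (fun ε => ∫ ω, Real.exp (-(∑ r ∈ Finset.Icc 1 n,
        s r * (xiProc κ ζ ε (t r) ω - xiProc κ ζ ε (t (r - 1)) ω))) ∂(Pq ε))
      (𝓝[>] (0:ℝ))
      (𝓝 ((1 + ∑ r ∈ Finset.Icc 1 n, A (s r) * (t r - t (r - 1)))⁻¹)) := by
  exact stmt8_general ε₀ hε₀ η κ ζ Pstart hprob hmeas hκnn Q hMRP p hp hB π hπ hA1 hA2 hC A hD q Pq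
    hq hmix
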